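/- arXiv:2604.22701 — 7 statements merged into one kernel-verified Lean document; each statement's English description precedes it below -/
import Mathlib

section
/- Let (Ω, 𝔐, μ) be a measure space, E and F complex Banach spaces, 1 ≤ p ≤ q < ∞ with q' the conjugate exponent of q, and let 𝒜 : Ω → B(E, F*) be weakly* measurable such that for every weakly p-summable sequence (x_n)_{n=1}^∞ in E and every q'-summable sequence (y_n)_{n=1}^∞ in F the function t ↦ ∑_{n=1}^∞ |⟨𝒜_t x_n, y_n⟩| belongs to L¹(Ω, 𝔐, μ). Then 𝒜 is weakly* integrable and, for every S ∈ 𝔐, the Gel'fand integral ∫_S 𝒜 dμ is a (q,p)-summing operator from E to F*; moreover the constant K(S) := sup { ∫_S ∑_{n=1}^∞ |⟨𝒜_t x_n, y_n⟩| dμ(t) : ‖(x_n)‖_{p,w} ≤ 1, ‖(y_n)‖_{q'} ≤ 1 } is an admissible (q,p)-summing constant for ∫_S 𝒜 dμ, i.e. π_{q,p}(∫_S 𝒜 dμ) ≤ K(S). -/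
open MeasureTheory ENNReal


/-- `C` is an admissible `(q,p)`-summing constant for `T`. -/
def IsSummingConstQP (q p : ℝ) {E F : Type*} [NormedAddCommGroup E] [NormedSpace ℂ E]
    [NormedAddCommGroup F] [NormedSpace ℂ F] (T : E →L[ℂ] F) (C : ℝ) : Prop :=
  ∀ (n : ℕ) (x : Fin n → E),
    (∑ k, ‖T (x k)‖ ^ q) ^ (1 / q) ≤
      C * ⨆ φ : {φ : StrongDual ℂ E // ‖φ‖ ≤ 1},
        (∑ k, ‖(φ : StrongDual ℂ E) (x k)‖ ^ p) ^ (1 / p)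

lemma aux_summable0 (w : ℕ → ℝ) (B : ℝ) (hw0 : ∀ j, 0 ≤ w j) (hw : Summable w)
    (a : ℕ → ℕ → ℝ) (ha : ∀ j n, 0 ≤ a j n)
    (hs : ∀ j, Summable (a j)) (hB : ∀ j, ∑' n, a j n ≤ B) :
    Summable (fun m : ℕ => w (Nat.unpair m).1 * a (Nat.unpair m).1 (Nat.unpair m).2) := by
  have h : Summable (fun z : ℕ × ℕ => w z.1 * a z.1 z.2) := by
    rw [summable_prod_of_nonneg (fun z => mul_nonneg (hw0 _) (ha _ _))]
    refine ⟨fun j => (hs j).mul_left (w j), ?_⟩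
    simp only [tsum_mul_left]
    exact Summable.of_nonneg_of_le (fun j => mul_nonneg (hw0 j) (tsum_nonneg (ha j)))
      (fun j => mul_le_mul_of_nonneg_left (hB j) (hw0 j)) (hw.mul_right B)
  exact (Nat.pairEquiv.symm.summable_iff (f := fun z : ℕ × ℕ => w z.1 * a z.1 z.2)).2 h

lemma aux_summable (r B : ℝ) (hr : 1 ≤ r) (a : ℕ → ℕ → ℝ) (ha : ∀ j n, 0 ≤ a j n)
    (hs : ∀ j, Summable (a j)) (hB : ∀ j, ∑' n, a j n ≤ B) :
    Summable (fun m : ℕ =>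
      ((1/2 : ℝ) ^ (Nat.unpair m).1) ^ r * a (Nat.unpair m).1 (Nat.unpair m).2) := by
  refine aux_summable0 (fun j => ((1/2 : ℝ) ^ j) ^ r) B (fun j => by positivity) ?_ a ha hs hB
  refine Summable.of_nonneg_of_le (fun j => by positivity) (fun j => ?_) summable_geometric_two
  have := Real.rpow_le_rpow_of_exponent_ge (x := (1/2 : ℝ) ^ j) (by positivity)
    (pow_le_one₀ (by norm_num) (by norm_num)) hr
  rwa [Real.rpow_one] at this

lemma aux_half_norm {V : Type*} [NormedAddCommGroup V] [NormedSpace ℂ V] (j : ℕ) (v : V) (r : ℝ) :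
    ‖((1/2 : ℂ) ^ j) • v‖ ^ r = ((1/2 : ℝ) ^ j) ^ r * ‖v‖ ^ r := by
  rw [norm_smul, Real.mul_rpow (norm_nonneg _) (norm_nonneg _)]
  simp

lemma aux_bound {E F : Type*} [NormedAddCommGroup E] [NormedSpace ℂ E]
    [NormedAddCommGroup F] [NormedSpace ℂ F]
    {Ω : Type*} [MeasurableSpace Ω] (μ : Measure Ω)
    (p q : ℝ) (hp : 1 ≤ p)
    (𝒜 : Ω → (E →L[ℂ] StrongDual ℂ F))
    (hmeas : ∀ (x : E) (y : F), Measurable (fun t => (𝒜 t x) y))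
    (hL1 : ∀ (x : ℕ → E) (y : ℕ → F),
      (∀ φ : StrongDual ℂ E, Summable fun n => ‖φ (x n)‖ ^ p) →
      (if 1 < q then Summable (fun n => ‖y n‖ ^ (q / (q - 1)))
        else BddAbove (Set.range fun n => ‖y n‖)) →
      ∫⁻ t, ∑' n, (‖(𝒜 t (x n)) (y n)‖₊ : ℝ≥0∞) ∂μ < ⊤) :
    ∃ C : ℝ, 0 ≤ C ∧ ∀ (x : ℕ → E) (y : ℕ → F),
      (∀ φ : StrongDual ℂ E, Summable fun n => ‖φ (x n)‖ ^ p) →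
      (∀ φ : StrongDual ℂ E, ‖φ‖ ≤ 1 → (∑' n, ‖φ (x n)‖ ^ p) ≤ 1) →
      (if 1 < q then
          Summable (fun n => ‖y n‖ ^ (q / (q - 1))) ∧
            (∑' n, ‖y n‖ ^ (q / (q - 1))) ≤ 1
        else ∀ n, ‖y n‖ ≤ 1) →
      ∫⁻ t, ∑' n, ‖(𝒜 t (x n)) (y n)‖ₑ ∂μ ≤ ENNReal.ofReal C := by
  by_contra! hcon
  choose x y hx1 hx2 hy hlt using fun j : ℕ => hcon ((4:ℝ)^j) (by positivity)
  let X : ℕ → E := fun m => ((1/2 : ℂ) ^ (Nat.unpair m).1) • x (Nat.unpair m).1 (Nat.unpair m).2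
  let Y : ℕ → F := fun m => ((1/2 : ℂ) ^ (Nat.unpair m).1) • y (Nat.unpair m).1 (Nat.unpair m).2
  have hX : ∀ φ : StrongDual ℂ E, Summable fun n => ‖φ (X n)‖ ^ p := by
    intro φ
    simp only [X, map_smul, aux_half_norm]
    refine aux_summable p (‖φ‖ ^ p) hp (fun j n => ‖φ (x j n)‖ ^ p) (fun j n => by positivity)
      (fun j => hx1 j φ) (fun j => ?_)
    by_cases h0 : φ = 0
    · subst h0
      simp [Real.zero_rpow (by linarith : p ≠ 0)]
    have hn : 0 < ‖φ‖ := norm_pos_iff.2 h0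
    have h := hx2 j (((‖φ‖⁻¹ : ℝ) : ℂ) • φ) (by
      rw [norm_smul]; simp [hn.ne'])
    have h2 : ∀ n, ‖(((‖φ‖⁻¹ : ℝ) : ℂ) • φ) (x j n)‖ ^ p = (‖φ‖ ^ p)⁻¹ * ‖φ (x j n)‖ ^ p := by
      intro n
      rw [smul_apply, norm_smul, Real.mul_rpow (norm_nonneg _) (norm_nonneg _),
        ← Real.inv_rpow (norm_nonneg _)]
      simp
    simp only [h2, tsum_mul_left] at h
    rwa [inv_mul_le_iff₀ (by positivity), mul_one] at h
  have hY : (if 1 < q then Summable (fun n => ‖Y n‖ ^ (q / (q - 1)))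
        else BddAbove (Set.range fun n => ‖Y n‖)) := by
    split_ifs with hq
    · simp only [hq, if_true] at hy
      simp only [Y, aux_half_norm]
      refine aux_summable _ 1 ?_ (fun j n => ‖y j n‖ ^ (q / (q-1))) (fun j n => by positivity)
        (fun j => (hy j).1) (fun j => (hy j).2)
      rw [le_div_iff₀ (by linarith)]; linarith
    · simp only [hq, if_false] at hy
      refine ⟨1, ?_⟩
      rintro _ ⟨m, rfl⟩
      simp only [Y, norm_smul, norm_pow]
      refine mul_le_one₀ (pow_le_one₀ (by positivity) (by norm_num)) (norm_nonneg _) (hy _ _)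
  have hfin := hL1 X Y hX hY
  refine hfin.ne ?_
  have hm : ∀ u v, Measurable fun t => ‖(𝒜 t u) v‖ₑ := fun u v => (hmeas u v).enorm
  have e1 : ∀ t, ∑' n, (‖(𝒜 t (X n)) (Y n)‖₊ : ℝ≥0∞)
      = ∑' j, ENNReal.ofReal ((1/4 : ℝ) ^ j) * ∑' n, ‖(𝒜 t (x j n)) (y j n)‖ₑ := by
    intro t
    have : ∀ m, (‖(𝒜 t (X m)) (Y m)‖₊ : ℝ≥0∞) =
      (fun z : ℕ × ℕ => ENNReal.ofReal ((1/4 : ℝ) ^ z.1) * ‖(𝒜 t (x z.1 z.2)) (y z.1 z.2)‖ₑ)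
        (Nat.pairEquiv.symm m) := by
      intro m
      simp only [X, Y, map_smul, smul_apply, smul_smul, Nat.pairEquiv_symm_apply]
      rw [← enorm_eq_nnnorm, enorm_smul, ← mul_pow, ← ofReal_norm]
      norm_num
    simp_rw [this]
    rw [Nat.pairEquiv.symm.tsum_eq (fun z : ℕ × ℕ => ENNReal.ofReal ((1/4 : ℝ) ^ z.1) * ‖(𝒜 t (x z.1 z.2)) (y z.1 z.2)‖ₑ), ENNReal.tsum_prod']
    simp_rw [ENNReal.tsum_mul_left]
  simp_rw [e1]
  have hm2 : ∀ j, Measurable fun t => ∑' n, ‖(𝒜 t (x j n)) (y j n)‖ₑ :=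
    fun j => Measurable.tsum fun n => hm _ _
  rw [lintegral_tsum (fun j => ((hm2 j).const_mul _).aemeasurable)]
  simp_rw [lintegral_const_mul _ (hm2 _)]
  rw [eq_top_iff]
  calc (⊤ : ℝ≥0∞) = ∑' j : ℕ, 1 := by
        rw [ENNReal.tsum_const_eq_top_of_ne_zero one_ne_zero]
    _ ≤ _ := by
      refine ENNReal.tsum_le_tsum fun j => ?_
      calc (1 : ℝ≥0∞) = ENNReal.ofReal ((1/4 : ℝ) ^ j) * ENNReal.ofReal ((4:ℝ)^j) := by
            rw [← ENNReal.ofReal_mul (by positivity), ← mul_pow]; norm_num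
        _ ≤ _ := by gcongr; exact (hlt j).le

lemma aux_dual {F : Type*} [NormedAddCommGroup F] [NormedSpace ℂ F] (n : ℕ)
    (T : Fin n → StrongDual ℂ F) (q : ℝ) (hq : 1 ≤ q) (M : ℝ)
    (h : ∀ y : Fin n → F, (if 1 < q then ∑ k, ‖y k‖ ^ (q / (q - 1)) ≤ 1 else ∀ k, ‖y k‖ ≤ 1) →
      ∑ k, ‖T k (y k)‖ ≤ M) : (∑ k, ‖T k‖ ^ q) ^ (1 / q) ≤ M := by
  have key : ∀ b : Fin n → NNReal,
      (if 1 < q then ∑ k, (b k : ℝ) ^ (q / (q - 1)) ≤ 1 else ∀ k, (b k : ℝ) ≤ 1) →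
      ∑ k, ‖T k‖ * b k ≤ M := by
    intro b hb
    have ht : Filter.Tendsto (fun r : ℝ => r * ∑ k, ‖T k‖ * b k) (nhdsWithin 1 (Set.Iio 1))
        (nhds (1 * ∑ k, ‖T k‖ * b k)) :=
      ((continuous_id.mul continuous_const).tendsto 1).mono_left nhdsWithin_le_nhds
    rw [one_mul] at ht
    refine le_of_tendsto ht ?_
    filter_upwards [Ioo_mem_nhdsLT (zero_lt_one' ℝ)] with r hr
    have hu : ∀ k, ∃ u : F, ‖u‖ ≤ 1 ∧ r * ‖T k‖ ≤ ‖T k u‖ := by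
      intro k
      by_cases h0 : ‖T k‖ = 0
      · exact ⟨0, by simp, by simp [h0]⟩
      · have hlt : r * ‖T k‖ < ‖T k‖ :=
          mul_lt_of_lt_one_left (lt_of_le_of_ne (norm_nonneg _) (Ne.symm h0)) hr.2
        obtain ⟨u, hu1, hu2⟩ := (T k).exists_lt_apply_of_lt_opNorm hlt
        exact ⟨u, hu1.le, hu2.le⟩
    choose u hu1 hu2 using hu
    have hyb : ∀ k, ‖((b k : ℝ) : ℂ) • u k‖ ≤ b k := by
      intro k
      rw [norm_smul]
      simp only [Complex.norm_real, NNReal.norm_eq]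
      exact mul_le_of_le_one_right (b k).2 (hu1 k)
    have := h (fun k => ((b k : ℝ) : ℂ) • u k) (by
      split_ifs with h1
      · simp only [h1, if_true] at hb
        refine le_trans (Finset.sum_le_sum fun k _ => ?_) hb
        exact Real.rpow_le_rpow (norm_nonneg _) (hyb k)
          (div_nonneg (by linarith) (by linarith))
      · simp only [h1, if_false] at hb
        exact fun k => (hyb k).trans (hb k))
    refine le_trans ?_ this
    rw [Finset.mul_sum]
    refine Finset.sum_le_sum fun k _ => ?_
    rw [map_smul, norm_smul]
    simp only [Complex.norm_real, NNReal.norm_eq]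
    rw [← mul_assoc, mul_comm (b k : ℝ)]
    exact mul_le_mul_of_nonneg_right (hu2 k) (b k).2
  by_cases h1 : 1 < q
  · have hc : q.HolderConjugate (q / (q - 1)) := Real.HolderConjugate.conjExponent h1
    obtain ⟨g, hg, hge⟩ := (NNReal.isGreatest_Lp Finset.univ (fun k => ‖T k‖₊) hc).1
    have := key g (by
      rw [if_pos h1]
      exact_mod_cast hg)
    have e : (∑ k, ‖T k‖ ^ q) ^ (1 / q) = ∑ k, ‖T k‖ * g k := by
      have := congrArg NNReal.toReal hge
      push_cast at this
      exact this.symm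
    rwa [e]
  · have hq1 : q = 1 := by linarith
    have := key (fun _ => 1) (by simp [h1])
    subst hq1
    simpa using this

lemma aux_hasSum (n : ℕ) (f : ℕ → ℝ) (hf : ∀ m, n ≤ m → f m = 0) :
    HasSum f (∑ k : Fin n, f k) := by
  rw [Fin.sum_univ_eq_sum_range]
  exact hasSum_sum_of_ne_finset_zero fun m hm => hf m (by simpa using hm)

/-- extension by zero -/
def auxExt {V : Type*} [Zero V] {n : ℕ} (x : Fin n → V) (m : ℕ) : V :=
  if h : m < n then x ⟨m, h⟩ else 0

lemma auxExt_coe {V : Type*} [Zero V] {n : ℕ} (x : Fin n → V) (k : Fin n) :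
    auxExt x k = x k := by simp [auxExt]

lemma auxExt_ge {V : Type*} [Zero V] {n : ℕ} (x : Fin n → V) (m : ℕ) (h : n ≤ m) :
    auxExt x m = 0 := by simp [auxExt, not_lt.2 h]

lemma aux_hasSum_ext {V : Type*} [NormedAddCommGroup V] {n : ℕ} (x : Fin n → V)
    (g : V → ℝ) (hg : g 0 = 0) : HasSum (fun m => g (auxExt x m)) (∑ k, g (x k)) := by
  have := aux_hasSum n (fun m => g (auxExt x m)) (fun m hm => by rw [auxExt_ge x m hm, hg])
  simpa only [auxExt_coe] using this

/-- if `𝒜 : Ω → B(E, F*)` is weakly* measurable and for all weakly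
`p`-summable `(x_n)` and `q'`-summable `(y_n)` the function
`t ↦ ∑_n |⟨𝒜_t x_n, y_n⟩|` is in `L¹(μ)`, then `𝒜` is weakly* integrable and every
Gel'fand integral `∫_S 𝒜 dμ` is `(q,p)`-summing, with
`K(S) = sup { ∫_S ∑_n |⟨𝒜_t x_n, y_n⟩| dμ : ‖(x_n)‖_{p,w} ≤ 1, ‖(y_n)‖_{q'} ≤ 1 }`
as an admissible `(q,p)`-summing constant. -/
theorem stmt7 (E F : Type*) [NormedAddCommGroup E] [NormedSpace ℂ E] [CompleteSpace E]
    [NormedAddCommGroup F] [NormedSpace ℂ F] [CompleteSpace F]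
    {Ω : Type*} [MeasurableSpace Ω] (μ : Measure Ω)
    (p q : ℝ) (hp : 1 ≤ p) (hpq : p ≤ q)
    (𝒜 : Ω → (E →L[ℂ] StrongDual ℂ F))
    (hmeas : ∀ (x : E) (y : F), Measurable (fun t => (𝒜 t x) y))
    (hL1 : ∀ (x : ℕ → E) (y : ℕ → F),
      (∀ φ : StrongDual ℂ E, Summable fun n => ‖φ (x n)‖ ^ p) →
      (if 1 < q then Summable (fun n => ‖y n‖ ^ (q / (q - 1)))
        else BddAbove (Set.range fun n => ‖y n‖)) →
      ∫⁻ t, ∑' n, (‖(𝒜 t (x n)) (y n)‖₊ : ℝ≥0∞) ∂μ < ⊤) :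
    (∀ (x : E) (y : F), Integrable (fun t => (𝒜 t x) y) μ) ∧
    ∀ S : Set Ω, MeasurableSet S →
      ∃ I : E →L[ℂ] StrongDual ℂ F,
        (∀ (x : E) (y : F), (I x) y = ∫ t in S, (𝒜 t x) y ∂μ) ∧
        (∃ C : ℝ, 0 ≤ C ∧ IsSummingConstQP q p I C) ∧
        IsSummingConstQP q p I
          (sSup {r : ℝ | ∃ (x : ℕ → E) (y : ℕ → F),
            (∀ φ : StrongDual ℂ E, Summable fun n => ‖φ (x n)‖ ^ p) ∧
            (∀ φ : StrongDual ℂ E, ‖φ‖ ≤ 1 → (∑' n, ‖φ (x n)‖ ^ p) ≤ 1) ∧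
            (if 1 < q then
                Summable (fun n => ‖y n‖ ^ (q / (q - 1))) ∧
                  (∑' n, ‖y n‖ ^ (q / (q - 1))) ≤ 1
              else ∀ n, ‖y n‖ ≤ 1) ∧
            r = ∫ t in S, ∑' n, ‖(𝒜 t (x n)) (y n)‖ ∂μ}) := by
  have hp0 : p ≠ 0 := by linarith
  have hq : 1 ≤ q := hp.trans hpq
  obtain ⟨C, hC0, hC⟩ := aux_bound μ p q hp 𝒜 hmeas hL1
  -- finite sequences are summable
  have hxs : ∀ (n : ℕ) (x : Fin n → E) (φ : StrongDual ℂ E),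
      HasSum (fun m => ‖φ (auxExt x m)‖ ^ p) (∑ k, ‖φ (x k)‖ ^ p) := fun n x φ =>
    aux_hasSum_ext x (fun v => ‖φ v‖ ^ p) (by simp [Real.zero_rpow hp0])
  have hys : 1 < q → ∀ (n : ℕ) (y : Fin n → F),
      HasSum (fun m => ‖auxExt y m‖ ^ (q / (q - 1))) (∑ k, ‖y k‖ ^ (q / (q - 1))) :=
    fun h1 n y => aux_hasSum_ext y (fun v => ‖v‖ ^ (q / (q - 1))) (by
      have : q / (q - 1) ≠ 0 := (div_pos (by linarith) (by linarith)).ne'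
      simp [Real.zero_rpow this])
  have hyb : ∀ (n : ℕ) (y : Fin n → F), (∀ k, ‖y k‖ ≤ 1) → ∀ m, ‖auxExt y m‖ ≤ 1 := by
    intro n y hy m
    unfold auxExt
    split_ifs
    · exact hy _
    · simp
  have hAs : ∀ (n : ℕ) (x : Fin n → E) (y : Fin n → F) (t : Ω),
      HasSum (fun m => ‖(𝒜 t (auxExt x m)) (auxExt y m)‖) (∑ k, ‖(𝒜 t (x k)) (y k)‖) := by
    intro n x y t
    have := aux_hasSum n (fun m => ‖(𝒜 t (auxExt x m)) (auxExt y m)‖)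
      (fun m hm => by simp [auxExt_ge x m hm])
    simpa only [auxExt_coe] using this
  -- normalised single vectors
  have hsingle : ∀ (x : E) (y : F), ‖x‖ ≤ 1 → ‖y‖ ≤ 1 →
      ∫⁻ t, ‖(𝒜 t x) y‖ₑ ∂μ ≤ ENNReal.ofReal C := by
    intro x y hx hy
    refine le_trans (lintegral_mono fun t => ?_)
      (hC (auxExt fun _ : Fin 1 => x) (auxExt fun _ : Fin 1 => y)
        (fun φ => (hxs 1 _ φ).summable) ?_ ?_)
    · have := ENNReal.le_tsum (f := fun m => ‖(𝒜 t (auxExt (fun _ : Fin 1 => x) m))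
        (auxExt (fun _ : Fin 1 => y) m)‖ₑ) 0
      simpa [auxExt] using this
    · intro φ hφ
      rw [(hxs 1 _ φ).tsum_eq]
      simp only [Finset.univ_unique, Finset.sum_const, Finset.card_singleton, one_smul]
      refine Real.rpow_le_one (norm_nonneg _) ?_ (by linarith)
      exact (φ.le_opNorm x).trans (mul_le_one₀ hφ (norm_nonneg _) hx)
    · split_ifs with h1
      · refine ⟨(hys h1 1 _).summable, ?_⟩
        rw [(hys h1 1 _).tsum_eq]
        simp only [Finset.univ_unique, Finset.sum_const, Finset.card_singleton, one_smul]
        exact Real.rpow_le_one (norm_nonneg _) hy (div_nonneg (by linarith) (by linarith))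
      · exact hyb 1 _ (fun _ => hy)
  have hscale : ∀ (v : E), ∃ u : E, ‖u‖ ≤ 1 ∧ v = (‖v‖ : ℂ) • u := by
    intro v
    by_cases h0 : v = 0
    · exact ⟨0, by simp, by simp [h0]⟩
    · have hn : (‖v‖ : ℂ) ≠ 0 := by simpa using h0
      refine ⟨(‖v‖ : ℂ)⁻¹ • v, ?_, ?_⟩
      · rw [norm_smul]
        simp [h0]
      · rw [smul_smul, mul_inv_cancel₀ hn, one_smul]
  have hscaleF : ∀ (v : F), ∃ u : F, ‖u‖ ≤ 1 ∧ v = (‖v‖ : ℂ) • u := by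
    intro v
    by_cases h0 : v = 0
    · exact ⟨0, by simp, by simp [h0]⟩
    · have hn : (‖v‖ : ℂ) ≠ 0 := by simpa using h0
      refine ⟨(‖v‖ : ℂ)⁻¹ • v, ?_, ?_⟩
      · rw [norm_smul]
        simp [h0]
      · rw [smul_smul, mul_inv_cancel₀ hn, one_smul]
  have hint1 : ∀ (x : E) (y : F), ‖x‖ ≤ 1 → ‖y‖ ≤ 1 → Integrable (fun t => (𝒜 t x) y) μ :=
    fun x y hx hy => ⟨(hmeas x y).aestronglyMeasurable,
      (hsingle x y hx hy).trans_lt ENNReal.ofReal_lt_top⟩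
  have hint : ∀ (x : E) (y : F), Integrable (fun t => (𝒜 t x) y) μ := by
    intro x y
    obtain ⟨u, hu, hxu⟩ := hscale x
    obtain ⟨v, hv, hyv⟩ := hscaleF y
    have := ((hint1 u v hu hv).const_mul (‖y‖ : ℂ)).const_mul (‖x‖ : ℂ)
    refine this.congr (Filter.Eventually.of_forall fun t => ?_)
    conv_rhs => rw [hxu, hyv]
    simp
    try ring
  refine ⟨hint, fun S hS => ?_⟩
  let Bl : E →ₗ[ℂ] F →ₗ[ℂ] ℂ := LinearMap.mk₂ ℂ (fun x y => ∫ t in S, (𝒜 t x) y ∂μ)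
    (fun x x' y => by
      simp only [map_add, add_apply]
      exact integral_add (hint x y).integrableOn (hint x' y).integrableOn)
    (fun c x y => by
      simp only [map_smul, smul_apply]
      exact integral_smul c _)
    (fun x y y' => by
      simp only [map_add]
      exact integral_add (hint x y).integrableOn (hint x y').integrableOn)
    (fun c x y => by
      simp only [map_smul]
      exact integral_smul c _)
  have hBl : ∀ x y, Bl x y = ∫ t in S, (𝒜 t x) y ∂μ := fun x y => rfl
  have hBl1 : ∀ x y, ‖x‖ ≤ 1 → ‖y‖ ≤ 1 → ‖Bl x y‖ ≤ C := by
    intro x y hx hy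
    rw [hBl]
    have h1 := enorm_integral_le_lintegral_enorm (μ := μ.restrict S) (fun t => (𝒜 t x) y)
    have h2 := (h1.trans (setLIntegral_le_lintegral S _)).trans (hsingle x y hx hy)
    rwa [← ofReal_norm, ENNReal.ofReal_le_ofReal_iff hC0] at h2
  have hBlb : ∀ x y, ‖Bl x y‖ ≤ C * ‖x‖ * ‖y‖ := by
    intro x y
    obtain ⟨u, hu, hxu⟩ := hscale x
    obtain ⟨v, hv, hyv⟩ := hscaleF y
    have e : ‖Bl x y‖ = ‖x‖ * (‖y‖ * ‖Bl u v‖) := by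
      conv_lhs => rw [hxu, hyv]
      simp only [map_smul, LinearMap.smul_apply, norm_smul, Complex.norm_real, norm_norm]
      try ring
    rw [e]
    have := mul_le_mul_of_nonneg_left (hBl1 u v hu hv) (mul_nonneg (norm_nonneg x) (norm_nonneg y))
    linarith
  let I : E →L[ℂ] StrongDual ℂ F := Bl.mkContinuous₂ C hBlb
  have hI : ∀ x y, (I x) y = ∫ t in S, (𝒜 t x) y ∂μ := fun x y => rfl
  clear_value I
  refine ⟨I, hI, ?_⟩
  set R : Set ℝ := _
  change (∃ C : ℝ, 0 ≤ C ∧ IsSummingConstQP q p I C) ∧ IsSummingConstQP q p I (sSup R)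
  have hRnn : 0 ≤ sSup R := by
    refine Real.sSup_nonneg ?_
    rintro r ⟨x, y, -, -, -, rfl⟩
    exact integral_nonneg fun t => tsum_nonneg fun n => norm_nonneg _
  have hRb : BddAbove R := by
    refine ⟨C, ?_⟩
    rintro r ⟨x, y, hx1, hx2, hy, rfl⟩
    have h1 := enorm_integral_le_lintegral_enorm (μ := μ.restrict S)
      (fun t => ∑' n, ‖(𝒜 t (x n)) (y n)‖)
    have h2 : ∫⁻ t in S, ‖∑' n, ‖(𝒜 t (x n)) (y n)‖‖ₑ ∂μ
        ≤ ∫⁻ t in S, ∑' n, ‖(𝒜 t (x n)) (y n)‖ₑ ∂μ := by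
      refine lintegral_mono fun t => ?_
      refine enorm_tsum_le_tsum_enorm.trans ?_
      simp
    have h3 := ((h1.trans h2).trans (setLIntegral_le_lintegral S _)).trans (hC x y hx1 hx2 hy)
    rw [← ofReal_norm, ENNReal.ofReal_le_ofReal_iff hC0] at h3
    exact (le_abs_self _).trans h3
  have main : IsSummingConstQP q p I (sSup R) := by
    intro n x
    have hbdd : BddAbove (Set.range fun φ : {φ : StrongDual ℂ E // ‖φ‖ ≤ 1} =>
        (∑ k, ‖(φ : StrongDual ℂ E) (x k)‖ ^ p) ^ (1 / p)) := by
      refine ⟨(∑ k, ‖x k‖ ^ p) ^ (1 / p), ?_⟩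
      rintro _ ⟨φ, rfl⟩
      refine Real.rpow_le_rpow (by positivity) (Finset.sum_le_sum fun k _ => ?_) (by positivity)
      refine Real.rpow_le_rpow (by positivity) ?_ (by positivity)
      exact (φ.1.le_opNorm (x k)).trans (mul_le_of_le_one_left (norm_nonneg _) φ.2)
    have hle := fun φ => le_ciSup hbdd φ
    set W : ℝ := ⨆ φ : {φ : StrongDual ℂ E // ‖φ‖ ≤ 1},
        (∑ k, ‖(φ : StrongDual ℂ E) (x k)‖ ^ p) ^ (1 / p) with hW
    have hW0 : 0 ≤ W := Real.iSup_nonneg fun φ => by positivity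
    have hWp : ∀ φ : StrongDual ℂ E, ‖φ‖ ≤ 1 → ∑ k, ‖φ (x k)‖ ^ p ≤ W ^ p := by
      intro φ hφ
      have := Real.rpow_le_rpow (by positivity) (hle ⟨φ, hφ⟩) (by linarith : 0 ≤ p)
      simp only at this
      rwa [← Real.rpow_mul (by positivity), one_div_mul_cancel hp0, Real.rpow_one] at this
    refine aux_dual n (fun k => I (x k)) q hq _ fun y hy => ?_
    rcases hW0.eq_or_lt with hz | hpos
    · have hx0 : ∀ k, x k = 0 := by
        intro k
        obtain ⟨g, hg1, hg2⟩ := exists_dual_vector'' ℂ (x k)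
        have h1 := hWp g hg1
        rw [← hz, Real.zero_rpow hp0] at h1
        have h2 := (Finset.single_le_sum (f := fun k => ‖g (x k)‖ ^ p)
          (fun k _ => by positivity) (Finset.mem_univ k)).trans h1
        simp only [hg2] at h2
        by_contra hne
        have : 0 < ‖x k‖ := norm_pos_iff.2 hne
        have h3 : (0:ℝ) < ‖((‖x k‖ : ℝ) : ℂ)‖ ^ p := by
          rw [Complex.norm_real, norm_norm]; positivity
        exact absurd h2 (not_le.2 h3)
      simp [hx0, ← hz]
    · let x' : Fin n → E := fun k => ((W⁻¹ : ℝ) : ℂ) • x k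
      have hmem : (∫ t in S, ∑' m, ‖(𝒜 t (auxExt x' m)) (auxExt y m)‖ ∂μ) ∈ R := by
        refine ⟨auxExt x', auxExt y, fun φ => (hxs n x' φ).summable, ?_, ?_, rfl⟩
        · intro φ hφ
          rw [(hxs n x' φ).tsum_eq]
          have : ∀ k, ‖φ (x' k)‖ ^ p = (W ^ p)⁻¹ * ‖φ (x k)‖ ^ p := by
            intro k
            simp only [x', map_smul, norm_smul]
            rw [Real.mul_rpow (norm_nonneg _) (norm_nonneg _), ← Real.inv_rpow hW0,
              Complex.norm_real, Real.norm_of_nonneg (inv_nonneg.2 hW0)]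
          simp only [this, ← Finset.mul_sum]
          rw [inv_mul_le_iff₀ (by positivity), mul_one]
          exact hWp φ hφ
        · split_ifs with h1
          · rw [if_pos h1] at hy
            exact ⟨(hys h1 n y).summable, by rwa [(hys h1 n y).tsum_eq]⟩
          · rw [if_neg h1] at hy
            exact hyb n y hy
      have hle := le_csSup hRb hmem
      simp only [(hAs n x' y _).tsum_eq] at hle
      rw [integral_finsetSum _ (fun k _ => (hint (x' k) (y k)).norm.integrableOn)] at hle
      have h4 : ∑ k, ‖I (x' k) (y k)‖ ≤ sSup R := by
        refine le_trans (Finset.sum_le_sum fun k _ => ?_) hle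
        rw [hI]
        exact norm_integral_le_integral_norm _
      have h5 : ∀ k, ‖I (x' k) (y k)‖ = W⁻¹ * ‖I (x k) (y k)‖ := by
        intro k
        simp only [x', map_smul, smul_apply, norm_smul]
        rw [Complex.norm_real, Real.norm_of_nonneg (inv_nonneg.2 hW0)]
      simp only [h5, ← Finset.mul_sum] at h4
      rw [inv_mul_le_iff₀ hpos] at h4
      linarith
  exact ⟨⟨sSup R, hRnn, main⟩, main⟩
end

section
/- Let (Ω, 𝔐, μ) be a measure space, E and F complex Banach spaces, 1 ≤ p ≤ q < ∞ with q' the conjugate exponent of q, and let 𝒜 : Ω → B(E, F*) be weakly* measurable such that for every weakly p-summable sequence (x_n)_{n=1}^∞ in E and every q'-summable sequence (y_n)_{n=1}^∞ in F the function t ↦ ∑_{n=1}^∞ |⟨𝒜_t x_n, y_n⟩| belongs to L¹(Ω, 𝔐, μ). Then sup { ∫_Ω ∑_{n=1}^∞ |⟨𝒜_t x_n, y_n⟩| dμ(t) : (x_n) weakly p-summable in E with ‖(x_n)‖_{p,w} ≤ 1, (y_n) q'-summable in F with ‖(y_n)‖_{q'} ≤ 1 } < +∞. -/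
open MeasureTheory ENNReal

lemma glue_summable (s : ℝ) (hs : 1 ≤ s) (u : ℕ → ℕ → ℝ) (hu : ∀ k n, 0 ≤ u k n)
    (h1 : ∀ k, Summable fun n => u k n ^ s) (h2 : ∀ k, ∑' n, u k n ^ s ≤ 1) :
    Summable fun m : ℕ => ((1 / 2 : ℝ) ^ (Nat.unpair m).1 *
      u (Nat.unpair m).1 (Nat.unpair m).2) ^ s := by
  have key : Summable fun z : ℕ × ℕ => ((1 / 2 : ℝ) ^ z.1 * u z.1 z.2) ^ s := by
    rw [summable_prod_of_nonneg (fun z => Real.rpow_nonneg (mul_nonneg (by positivity) (hu _ _)) _)]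
    have e : ∀ k n, ((1 / 2 : ℝ) ^ k * u k n) ^ s = ((1 / 2 : ℝ) ^ k) ^ s * u k n ^ s :=
      fun k n => Real.mul_rpow (by positivity) (hu _ _)
    constructor
    · intro k
      simp only [e]
      exact (h1 k).mul_left _
    · simp only [e, tsum_mul_left]
      refine Summable.of_nonneg_of_le (fun k => mul_nonneg (by positivity)
        (tsum_nonneg fun n => Real.rpow_nonneg (hu _ _) _)) (fun k => ?_) summable_geometric_two
      have h3 : ((1 / 2 : ℝ) ^ k) ^ s ≤ (1 / 2 : ℝ) ^ k :=
        Real.rpow_le_self_of_le_one (by positivity)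
          (pow_le_one₀ (by norm_num) (by norm_num)) hs
      calc _ ≤ ((1 / 2 : ℝ) ^ k) ^ s * 1 := by gcongr; exact h2 k
        _ ≤ _ := by simpa using h3
  exact (Nat.pairEquiv.symm.summable_iff (f := fun z : ℕ × ℕ =>
    ((1 / 2 : ℝ) ^ z.1 * u z.1 z.2) ^ s)).2 key

/-- if `𝒜 : Ω → B(E, F*)` is weakly* measurable and for all weakly
`p`-summable `(x_n)` and `q'`-summable `(y_n)` the function
`t ↦ ∑_n |⟨𝒜_t x_n, y_n⟩|` is in `L¹(μ)`, then the supremum of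
`∫_Ω ∑_n |⟨𝒜_t x_n, y_n⟩| dμ` over `‖(x_n)‖_{p,w} ≤ 1` and `‖(y_n)‖_{q'} ≤ 1`
is finite. -/
theorem stmt8 (E F : Type*) [NormedAddCommGroup E] [NormedSpace ℂ E] [CompleteSpace E]
    [NormedAddCommGroup F] [NormedSpace ℂ F] [CompleteSpace F]
    {Ω : Type*} [MeasurableSpace Ω] (μ : Measure Ω)
    (p q : ℝ) (hp : 1 ≤ p) (hpq : p ≤ q)
    (𝒜 : Ω → (E →L[ℂ] StrongDual ℂ F))
    (hmeas : ∀ (x : E) (y : F), Measurable (fun t => (𝒜 t x) y))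
    (hL1 : ∀ (x : ℕ → E) (y : ℕ → F),
      (∀ φ : StrongDual ℂ E, Summable fun n => ‖φ (x n)‖ ^ p) →
      (if 1 < q then Summable (fun n => ‖y n‖ ^ (q / (q - 1)))
        else BddAbove (Set.range fun n => ‖y n‖)) →
      ∫⁻ t, ∑' n, (‖(𝒜 t (x n)) (y n)‖₊ : ℝ≥0∞) ∂μ < ⊤) :
    sSup {r : ℝ≥0∞ | ∃ (x : ℕ → E) (y : ℕ → F),
      (∀ φ : StrongDual ℂ E, Summable fun n => ‖φ (x n)‖ ^ p) ∧
      (∀ φ : StrongDual ℂ E, ‖φ‖ ≤ 1 → (∑' n, ‖φ (x n)‖ ^ p) ≤ 1) ∧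
      (if 1 < q then
          Summable (fun n => ‖y n‖ ^ (q / (q - 1))) ∧
            (∑' n, ‖y n‖ ^ (q / (q - 1))) ≤ 1
        else ∀ n, ‖y n‖ ≤ 1) ∧
      r = ∫⁻ t, ∑' n, (‖(𝒜 t (x n)) (y n)‖₊ : ℝ≥0∞) ∂μ} < ⊤ := by
  by_contra hcon
  have htop := not_lt_top_iff.1 hcon
  rw [sSup_eq_top] at htop
  have hex := fun k : ℕ => htop (8 ^ k) (ENNReal.pow_lt_top (by norm_num))
  choose r hr hrk using hex
  choose X Y hX hX1 hY hrI using hr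
  have hnorm : ∀ k : ℕ, ‖((1 / 2 : ℂ) ^ k)‖ = (1 / 2 : ℝ) ^ k := by intro k; simp
  have hlt := hL1 (fun m => ((1 / 2 : ℂ) ^ (Nat.unpair m).1) • X (Nat.unpair m).1 (Nat.unpair m).2)
    (fun m => ((1 / 2 : ℂ) ^ (Nat.unpair m).1) • Y (Nat.unpair m).1 (Nat.unpair m).2) ?_ ?_
  · have hge : ∀ k : ℕ, (2 : ℝ≥0∞) ^ k ≤ ∫⁻ t, ∑' m : ℕ,
        (‖(𝒜 t (((1 / 2 : ℂ) ^ (Nat.unpair m).1) • X (Nat.unpair m).1 (Nat.unpair m).2))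
          (((1 / 2 : ℂ) ^ (Nat.unpair m).1) • Y (Nat.unpair m).1 (Nat.unpair m).2)‖₊ : ℝ≥0∞) ∂μ := by
      intro k
      have hc : (2 : ℝ≥0∞) ^ k = ((1 / 4 : NNReal) ^ k : NNReal) * (8 : ℝ≥0∞) ^ k := by
        have : (2 : NNReal) ^ k = (1 / 4 : NNReal) ^ k * 8 ^ k := by
          rw [← mul_pow]; congr 1; norm_num [div_mul_eq_mul_div]
        exact_mod_cast congrArg (fun a : NNReal => (a : ℝ≥0∞)) this
      rw [hc]
      calc _ ≤ (((1 / 4 : NNReal) ^ k : NNReal) : ℝ≥0∞) * r k := by gcongr; exact (hrk k).le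
        _ ≤ ∫⁻ t, (((1 / 4 : NNReal) ^ k : NNReal) : ℝ≥0∞) *
              ∑' n, (‖(𝒜 t (X k n)) (Y k n)‖₊ : ℝ≥0∞) ∂μ := by
            rw [hrI k]; exact lintegral_const_mul_le _ _
        _ ≤ _ := by
            refine lintegral_mono fun t => ?_
            dsimp only
            rw [← ENNReal.tsum_mul_left]
            have hinj : Function.Injective (fun n => Nat.pair k n) := by
              intro a b hab
              simpa using (Nat.pair_eq_pair.1 hab).2
            refine le_trans (le_of_eq ?_) (ENNReal.tsum_comp_le_tsum_of_injective hinj _)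
            refine tsum_congr fun n => ?_
            simp only [Nat.unpair_pair, map_smul, ContinuousLinearMap.smul_apply, smul_eq_mul]
            rw [← ENNReal.coe_mul]
            congr 1
            ext
            simp only [NNReal.coe_mul, coe_nnnorm, norm_mul, hnorm]
            push_cast
            rw [← mul_assoc, ← mul_pow]
            norm_num
    have h2 : Filter.Tendsto (fun k : ℕ => (2 : ℝ≥0∞) ^ k) Filter.atTop (nhds ⊤) :=
      ENNReal.tendsto_pow_atTop_nhds_top_iff.2 (by norm_num)
    exact absurd (le_of_tendsto' h2 hge) (not_le.2 hlt)
  · intro φ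
    have hc : 0 < ‖φ‖ + 1 := by positivity
    have hψ : ‖((‖φ‖ + 1 : ℝ) : ℂ)⁻¹ • φ‖ ≤ 1 := by
      rw [norm_smul, norm_inv, Complex.norm_real, Real.norm_of_nonneg hc.le,
        inv_mul_le_iff₀ hc]
      linarith
    have hS := glue_summable p hp (fun k n => ‖(((‖φ‖ + 1 : ℝ) : ℂ)⁻¹ • φ) (X k n)‖)
      (fun _ _ => norm_nonneg _) (fun k => hX k _) (fun k => hX1 k _ hψ)
    refine (hS.mul_left ((‖φ‖ + 1) ^ p)).congr fun m => ?_
    rw [← Real.mul_rpow hc.le (by positivity)]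
    congr 1
    simp only [map_smul, ContinuousLinearMap.smul_apply, smul_eq_mul, norm_mul, hnorm,
      norm_inv, Complex.norm_real, Real.norm_of_nonneg hc.le]
    field_simp
  · split_ifs with hq
    · simp only [if_pos hq] at hY
      have hs : 1 ≤ q / (q - 1) := by
        rw [le_div_iff₀ (by linarith)]; linarith
      refine (glue_summable _ hs (fun k n => ‖Y k n‖) (fun _ _ => norm_nonneg _)
        (fun k => (hY k).1) (fun k => (hY k).2)).congr fun m => ?_
      rw [norm_smul, hnorm]
    · simp only [if_neg hq] at hY
      refine ⟨1, ?_⟩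
      rintro _ ⟨m, rfl⟩
      dsimp only
      rw [norm_smul, hnorm]
      exact mul_le_one₀ (pow_le_one₀ (by norm_num) (by norm_num)) (norm_nonneg _) (hY _ _)
end

section
/- Let H be an infinite-dimensional separable complex Hilbert space with orthonormal basis (e_n)_{n≥1}, let q ≥ 2 with conjugate exponent q', and define 𝒜 : [0,1) → B(H) by 𝒜_t h = n·⟨h, e_1⟩·e_n for t ∈ [1/(n+1), 1/n) (n ≥ 1) and 𝒜_0 = 0. Then for every weakly 2-summable sequence (f_m)_{m=1}^∞ in H and every q'-summable sequence (g_m)_{m=1}^∞ in H, ∫_{[0,1)} ∑_{m=1}^∞ |⟨𝒜_t f_m, g_m⟩| dt ≤ M · ‖(f_m)‖_{2,w} · ‖(g_m)‖_{q'} < +∞, where the integral is with respect to Lebesgue measure and M = √(π²/6 − 1) = √(∑_{n=1}^∞ 1/(n+1)²). -/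
open MeasureTheory ENNReal

lemma aux_zeta : Real.pi ^ 2 / 6 - 1 = ∑' n : ℕ, 1 / ((n : ℝ) + 2) ^ 2 ∧
    Summable (fun n : ℕ => 1 / ((n : ℝ) + 2) ^ 2) := by
  have h := hasSum_zeta_two
  have h2 := (hasSum_nat_add_iff' (f := fun n : ℕ => 1 / (n : ℝ) ^ 2) 2).2 h
  have h3 : (fun n : ℕ => 1 / (((n + 2 : ℕ) : ℝ)) ^ 2) = fun n : ℕ => 1 / ((n : ℝ) + 2) ^ 2 := by
    funext n; push_cast; rfl
  rw [h3] at h2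
  refine ⟨?_, h2.summable⟩
  rw [h2.tsum_eq]
  simp [Finset.sum_range_succ]

lemma aux_cs (a b : ℕ → ℝ≥0∞) :
    ∑' m, a m * b m ≤ (∑' m, a m ^ (2 : ℝ)) ^ ((1 : ℝ) / 2) * (∑' m, b m ^ (2 : ℝ)) ^ ((1 : ℝ) / 2) := by
  have h := ENNReal.lintegral_mul_le_Lp_mul_Lq (Measure.count : Measure ℕ)
    (Real.HolderConjugate.two_two) (f := a) (g := b)
    (measurable_of_countable _).aemeasurable (measurable_of_countable _).aemeasurable
  simpa [lintegral_count] using h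

lemma aux_lp (x : ℕ → ℝ≥0∞) (p : ℝ) (hp : 0 < p) (hp2 : p ≤ 2) :
    (∑' m, x m ^ (2 : ℝ)) ^ ((1 : ℝ) / 2) ≤ (∑' m, x m ^ p) ^ (1 / p) := by
  set S := ∑' m, x m ^ p with hS
  have h1 : ∀ m, x m ≤ S ^ (1 / p) := fun m => by
    rw [one_div, ENNReal.le_rpow_inv_iff hp]
    exact ENNReal.le_tsum m
  have h2 : ∑' m, x m ^ (2 : ℝ) ≤ S ^ (2 / p) := by
    calc ∑' m, x m ^ (2 : ℝ) ≤ ∑' m, x m ^ p * (S ^ (1 / p)) ^ (2 - p) := by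
          refine ENNReal.tsum_le_tsum fun m => ?_
          have : x m ^ (2 : ℝ) = x m ^ p * x m ^ (2 - p) := by
            rw [← ENNReal.rpow_add_of_nonneg _ _ hp.le (by linarith)]; congr 1; ring
          rw [this]
          gcongr
          exact h1 m
      _ = S * S ^ ((2 - p) / p) := by
          rw [ENNReal.tsum_mul_right, ← ENNReal.rpow_mul]; congr 2; ring
      _ = S ^ (1 + (2 - p) / p) := by
          rw [ENNReal.rpow_add_of_nonneg _ _ zero_le_one (div_nonneg (by linarith) hp.le), ENNReal.rpow_one]
      _ = S ^ (2 / p) := by congr 1; field_simp; ring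
  calc _ ≤ (S ^ (2 / p)) ^ ((1 : ℝ) / 2) := by gcongr
    _ = _ := by rw [← ENNReal.rpow_mul]; congr 1; field_simp

lemma aux_ofReal (x : ℕ → ℝ) (hx : ∀ m, 0 ≤ x m) (p r : ℝ) (hp : 0 ≤ p) (hr : 0 ≤ r)
    (hs : Summable fun m => x m ^ p) :
    (∑' m, ENNReal.ofReal (x m) ^ p) ^ r = ENNReal.ofReal ((∑' m, x m ^ p) ^ r) := by
  rw [← ENNReal.ofReal_rpow_of_nonneg (tsum_nonneg fun m => Real.rpow_nonneg (hx m) _) hr,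
    ENNReal.ofReal_tsum_of_nonneg (fun m => Real.rpow_nonneg (hx m) _) hs]
  congr 2; funext m
  exact ENNReal.ofReal_rpow_of_nonneg (hx m) hp

lemma aux_bdd {H : Type*} [NormedAddCommGroup H] [InnerProductSpace ℂ H]
    [CompleteSpace H] (u : ℕ → H) (hu : Orthonormal ℂ u) (f : ℕ → H)
    (hf : ∀ h : H, Summable fun m => ‖(inner ℂ h (f m) : ℂ)‖ ^ (2 : ℝ)) :
    BddAbove (Set.range fun h : {h : H // ‖h‖ ≤ 1} =>
      (∑' m, ‖(inner ℂ (h : H) (f m) : ℂ)‖ ^ (2 : ℝ)) ^ ((1 : ℝ) / 2)) := by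
  let T : ℕ → H →L[ℂ] H := fun N => ∑ m ∈ Finset.range N, (innerSL ℂ (f m)).smulRight (u m)
  have hT : ∀ N h, ‖T N h‖ ^ 2 = ∑ m ∈ Finset.range N, ‖(inner ℂ h (f m) : ℂ)‖ ^ (2 : ℝ) := by
    intro N h
    have h1 : T N h = ∑ m ∈ Finset.range N, (inner ℂ (f m) h : ℂ) • u m := by
      simp [T]
    have h2 : ((‖T N h‖ ^ 2 : ℝ) : ℂ) = ((∑ m ∈ Finset.range N, ‖(inner ℂ h (f m) : ℂ)‖ ^ (2 : ℝ) : ℝ) : ℂ) := by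
      have := inner_self_eq_norm_sq_to_K (𝕜 := ℂ) (T N h)
      rw [h1, hu.inner_sum] at this
      rw [h1]
      push_cast
      refine (Eq.trans this.symm ?_)
      refine Finset.sum_congr rfl fun m _ => ?_
      rw [← norm_inner_symm (𝕜 := ℂ) (f m) h, RCLike.conj_mul]
      norm_cast
    exact_mod_cast h2
  obtain ⟨C, hC⟩ := banach_steinhaus (g := T) (fun h => by
    refine ⟨Real.sqrt (∑' m, ‖(inner ℂ h (f m) : ℂ)‖ ^ (2 : ℝ)), fun N => ?_⟩
    apply Real.le_sqrt_of_sq_le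
    rw [hT]
    exact (hf h).sum_le_tsum _ (fun m _ => by positivity))
  refine ⟨(C ^ 2) ^ ((1 : ℝ) / 2), ?_⟩
  rintro _ ⟨⟨h, hh⟩, rfl⟩
  refine Real.rpow_le_rpow (tsum_nonneg fun m => by positivity) ?_ (by norm_num)
  refine (hf h).tsum_le_of_sum_range_le fun N => ?_
  rw [← hT]
  have h3 : ‖T N h‖ ≤ C := by
    refine ((T N).le_opNorm h).trans ?_
    have := hC N
    nlinarith [norm_nonneg (T N), norm_nonneg h]
  gcongr

lemma aux_int (F : ℝ → ℝ≥0∞) (S : ℕ → ℝ≥0∞)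
    (hF : ∀ n : ℕ, ∀ t ∈ Set.Ico (1 / ((n : ℝ) + 2)) (1 / ((n : ℝ) + 1)),
      F t = ENNReal.ofReal ((n : ℝ) + 1) * S n) :
    ∫⁻ t in Set.Ico (0 : ℝ) 1, F t ≤ ∑' n : ℕ, ENNReal.ofReal (1 / ((n : ℝ) + 2)) * S n := by
  rw [← setLIntegral_congr (Ioo_ae_eq_Ico (μ := volume))]
  have hsub : Set.Ioo (0 : ℝ) 1 ⊆ ⋃ n : ℕ, Set.Ico (1 / ((n : ℝ) + 2)) (1 / ((n : ℝ) + 1)) := by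
    rintro t ⟨h0, h1⟩
    have ht : 1 < 1 / t := by rw [lt_div_iff₀ h0]; linarith
    have hc : 1 < ⌈1 / t⌉₊ := by rw [Nat.lt_ceil]; simpa using ht
    obtain ⟨n, hn⟩ : ∃ n, ⌈1 / t⌉₊ = n + 2 := ⟨⌈1 / t⌉₊ - 2, by omega⟩
    refine Set.mem_iUnion.2 ⟨n, ?_, ?_⟩
    · have := Nat.le_ceil (1 / t)
      rw [hn] at this; push_cast at this
      rw [div_le_iff₀ h0] at this
      rw [div_le_iff₀ (by positivity)]; linarith
    · have := (Nat.lt_ceil (n := n + 1) (a := 1 / t)).1 (by omega)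
      push_cast at this
      rw [lt_div_iff₀ h0] at this
      rw [lt_div_iff₀ (by positivity)]; linarith
  refine (lintegral_mono_set hsub).trans ((lintegral_iUnion_le _ _).trans ?_)
  refine ENNReal.tsum_le_tsum fun n => ?_
  rw [setLIntegral_congr_fun measurableSet_Ico (fun t ht => hF n t ht), setLIntegral_const,
    Real.volume_Ico, mul_right_comm, ← ENNReal.ofReal_mul (by positivity)]
  apply le_of_eq
  congr 2
  field_simp
  ring

lemma aux_bessel {H : Type*} [NormedAddCommGroup H] [InnerProductSpace ℂ H]
    (u : ℕ → H) (hu : Orthonormal ℂ u) (x : H) :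
    ∑' n : ℕ, ENNReal.ofReal (1 / ((n : ℝ) + 2)) * ENNReal.ofReal ‖(inner ℂ (u n) x : ℂ)‖ ≤
      ENNReal.ofReal (Real.sqrt (Real.pi ^ 2 / 6 - 1)) * ENNReal.ofReal ‖x‖ := by
  refine (aux_cs _ _).trans ?_
  have hz := aux_zeta
  have e1 : ∀ n : ℕ, (1 / ((n : ℝ) + 2)) ^ (2 : ℝ) = 1 / ((n : ℝ) + 2) ^ 2 := fun n => by
    rw [Real.rpow_two, div_pow, one_pow]
  rw [aux_ofReal _ (fun n => by positivity) 2 _ (by norm_num) (by norm_num) (by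
      simp_rw [e1]; exact hz.2),
    aux_ofReal _ (fun n => by positivity) 2 _ (by norm_num) (by norm_num) (by
      simp_rw [Real.rpow_two]; exact hu.inner_products_summable x)]
  simp_rw [e1, Real.rpow_two]
  rw [← hz.1, ← Real.sqrt_eq_rpow, ← Real.sqrt_eq_rpow]
  gcongr
  exact Real.sqrt_le_iff.2 ⟨norm_nonneg _, hu.tsum_inner_products_le x⟩

/-- for the operator-valued function `𝒜` on `[0,1)` given by
`𝒜_t h = n ⟨h, e_1⟩ e_n` on `[1/(n+1), 1/n)` (with `(e_n)_{n ≥ 1}` an orthonormal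
basis of a separable Hilbert space `H`), and `q ≥ 2`, one has for every weakly
`2`-summable `(f_m)` and `q'`-summable `(g_m)` in `H`:
`∫_{[0,1)} ∑_m |⟨𝒜_t f_m, g_m⟩| dt ≤ M ‖(f_m)‖_{2,w} ‖(g_m)‖_{q'} < ∞`,
where `M = √(π²/6 − 1) = √(∑_{n ≥ 1} 1/(n+1)²)`. -/
theorem stmt10 (H : Type*) [NormedAddCommGroup H] [InnerProductSpace ℂ H]
    [CompleteSpace H]
    (e : ℕ → H) (he : Orthonormal ℂ (fun n : ℕ => e (n + 1)))
    (hsp : (Submodule.span ℂ (Set.range (fun n : ℕ => e (n + 1)))).topologicalClosure = ⊤)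
    (q : ℝ) (hq : 2 ≤ q)
    (𝒜 : ℝ → (H →L[ℂ] H))
    (h𝒜 : ∀ n : ℕ, 1 ≤ n →
      ∀ t ∈ Set.Ico (1 / ((n : ℝ) + 1)) (1 / (n : ℝ)),
        ∀ h : H, 𝒜 t h = (n : ℂ) • ((inner ℂ (e 1) h : ℂ) • e n))
    (h0 : 𝒜 0 = 0) :
    Real.sqrt (Real.pi ^ 2 / 6 - 1) = Real.sqrt (∑' n : ℕ, 1 / ((n : ℝ) + 2) ^ 2) ∧
    ∀ (f g : ℕ → H),
      (∀ h : H, Summable fun m => ‖(inner ℂ h (f m) : ℂ)‖ ^ (2 : ℝ)) →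
      (Summable fun m => ‖g m‖ ^ (q / (q - 1))) →
      ∫⁻ t in Set.Ico (0 : ℝ) 1, ∑' m, (‖(inner ℂ (g m) (𝒜 t (f m)) : ℂ)‖₊ : ℝ≥0∞) ≤
        ENNReal.ofReal (Real.sqrt (Real.pi ^ 2 / 6 - 1) *
          ((⨆ h : {h : H // ‖h‖ ≤ 1},
              (∑' m, ‖(inner ℂ (h : H) (f m) : ℂ)‖ ^ (2 : ℝ)) ^ ((1 : ℝ) / 2)) *
            (∑' m, ‖g m‖ ^ (q / (q - 1))) ^ ((q - 1) / q))) := by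
  refine ⟨by rw [aux_zeta.1], fun f g hf hg => ?_⟩
  have hq1 : 0 < q - 1 := by linarith
  have hp : 0 < q / (q - 1) := by positivity
  have hp2 : q / (q - 1) ≤ 2 := by rw [div_le_iff₀ hq1]; linarith
  have hpi : 1 / (q / (q - 1)) = (q - 1) / q := by rw [one_div_div]
  have hbdd := aux_bdd _ he f hf
  have he1 : ‖e 1‖ ≤ 1 := (he.1 0).le
  have hsup := le_ciSup hbdd ⟨e 1, he1⟩
  refine (aux_int _ (fun n => ∑' m, ENNReal.ofReal ‖(inner ℂ (e 1) (f m) : ℂ)‖ *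
    ENNReal.ofReal ‖(inner ℂ (e (n + 1)) (g m) : ℂ)‖) ?_).trans ?_
  · intro n t ht
    rw [← ENNReal.tsum_mul_left]
    refine tsum_congr fun m => ?_
    have ht' : t ∈ Set.Ico (1 / (((n + 1 : ℕ) : ℝ) + 1)) (1 / ((n + 1 : ℕ) : ℝ)) := by
      push_cast
      rw [show (n : ℝ) + 1 + 1 = n + 2 by ring]
      exact ht
    rw [h𝒜 (n + 1) (by omega) t ht', ← enorm_eq_nnnorm, ← ofReal_norm,
      inner_smul_right, inner_smul_right, norm_mul, norm_mul, norm_inner_symm (g m) (e (n + 1)),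
      ENNReal.ofReal_mul (norm_nonneg _), ENNReal.ofReal_mul (norm_nonneg _), Complex.norm_natCast]
    push_cast
    rfl
  calc ∑' n : ℕ, ENNReal.ofReal (1 / ((n : ℝ) + 2)) *
        ∑' m, ENNReal.ofReal ‖(inner ℂ (e 1) (f m) : ℂ)‖ *
          ENNReal.ofReal ‖(inner ℂ (e (n + 1)) (g m) : ℂ)‖
      = ∑' m, ENNReal.ofReal ‖(inner ℂ (e 1) (f m) : ℂ)‖ *
          ∑' n : ℕ, ENNReal.ofReal (1 / ((n : ℝ) + 2)) *
            ENNReal.ofReal ‖(inner ℂ (e (n + 1)) (g m) : ℂ)‖ := by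
        simp_rw [← ENNReal.tsum_mul_left]
        rw [ENNReal.tsum_comm]
        refine tsum_congr fun m => tsum_congr fun n => ?_
        ring
    _ ≤ ∑' m, ENNReal.ofReal (Real.sqrt (Real.pi ^ 2 / 6 - 1)) *
          (ENNReal.ofReal ‖(inner ℂ (e 1) (f m) : ℂ)‖ * ENNReal.ofReal ‖g m‖) := by
        refine ENNReal.tsum_le_tsum fun m => ?_
        rw [mul_left_comm]
        gcongr
        exact aux_bessel _ he (g m)
    _ ≤ ENNReal.ofReal (Real.sqrt (Real.pi ^ 2 / 6 - 1)) *
          ((∑' m, ENNReal.ofReal ‖(inner ℂ (e 1) (f m) : ℂ)‖ ^ (2 : ℝ)) ^ ((1 : ℝ) / 2) *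
            (∑' m, ENNReal.ofReal ‖g m‖ ^ (q / (q - 1))) ^ ((q - 1) / q)) := by
        rw [ENNReal.tsum_mul_left]
        gcongr
        refine (aux_cs _ _).trans ?_
        gcongr
        rw [← hpi]
        exact aux_lp _ _ hp hp2
    _ ≤ _ := by
        rw [aux_ofReal _ (fun m => norm_nonneg _) 2 _ (by norm_num) (by norm_num) (hf (e 1)),
          aux_ofReal _ (fun m => norm_nonneg _) _ _ hp.le (by positivity) hg,
          ← ENNReal.ofReal_mul (by positivity), ← ENNReal.ofReal_mul (by positivity)]
        apply ENNReal.ofReal_le_ofReal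
        gcongr
end

section
/- Let H be an infinite-dimensional separable complex Hilbert space, and let (x_n)_{n=1}^∞ be a sequence in H with ‖(x_n)‖_{2,w} ≤ 1, i.e. ∑_{n=1}^∞ |⟨x_n, h⟩|² ≤ ‖h‖² for every h ∈ H. Then there exist orthonormal bases (f_n)_{n=1}^∞, (g_n)_{n=1}^∞ and (h_n)_{n=1}^∞ of H such that x_n = f_n + g_n + h_n for every n. -/
open MeasureTheory

section Helpers

variable {H : Type*} [NormedAddCommGroup H] [InnerProductSpace ℂ H] [CompleteSpace H]

/-- Fixed vectors of a contraction are fixed by the adjoint. -/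
lemma adjoint_fixed (T : H →L[ℂ] H) (hT : ‖T‖ ≤ 1) (x : H) (hx : T x = x) :
    (ContinuousLinearMap.adjoint T) x = x := by
  have h1 : ‖(ContinuousLinearMap.adjoint T) x‖ ≤ ‖x‖ := by
    have := (ContinuousLinearMap.adjoint T).le_of_opNorm_le (c := 1) (by simpa using hT) x
    simpa using this
  have h2 := norm_sub_sq (𝕜 := ℂ) ((ContinuousLinearMap.adjoint T) x) x
  rw [ContinuousLinearMap.adjoint_inner_left, hx, inner_self_eq_norm_sq] at h2
  have h3 : ‖(ContinuousLinearMap.adjoint T) x - x‖ = 0 := by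
    have h0 := norm_nonneg ((ContinuousLinearMap.adjoint T) x)
    have : ‖(ContinuousLinearMap.adjoint T) x - x‖ ^ 2 ≤ 0 := by nlinarith
    exact pow_eq_zero_iff (two_ne_zero) |>.1 (le_antisymm this (sq_nonneg _))
  exact sub_eq_zero.1 (norm_eq_zero.1 h3)

/-- The map `(x, k) ↦ R x + k` has dense range when `ker R* ⊆ K`. -/
lemma denseRange_coprod (R : H →L[ℂ] H) (K : Submodule ℂ H)
    (hR : ∀ y, (ContinuousLinearMap.adjoint R) y = 0 → y ∈ K) :
    DenseRange ((R : H →ₗ[ℂ] H).coprod K.subtype) := by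
  have h : (LinearMap.range ((R : H →ₗ[ℂ] H).coprod K.subtype)).topologicalClosure = ⊤ := by
    rw [Submodule.topologicalClosure_eq_top_iff, Submodule.eq_bot_iff]
    intro y hy
    rw [Submodule.mem_orthogonal] at hy
    have h1 : (ContinuousLinearMap.adjoint R) y = 0 := by
      refine ext_inner_left ℂ fun v => ?_
      rw [ContinuousLinearMap.adjoint_inner_right, inner_zero_right]
      exact hy _ ⟨(v, 0), by simp⟩
    have h2 := hy y ⟨(0, ⟨y, hR y h1⟩), by simp⟩
    exact inner_self_eq_zero.1 h2
  have := (Submodule.dense_iff_topologicalClosure_eq_top).2 h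
  rw [LinearMap.coe_range] at this
  exact this

/-- Polar decomposition with a unitary factor when `ker S = ker S*`. -/
lemma unitary_polar (S : H →L[ℂ] H)
    (hS : ∀ y, S y = 0 ↔ (ContinuousLinearMap.adjoint S) y = 0) :
    ∃ W : H ≃ₗᵢ[ℂ] H, ∀ y, W (CFC.abs S y) = S y := by
  set P := CFC.abs S with hP
  have hPsa : ContinuousLinearMap.adjoint P = P :=
    (CFC.abs_nonneg S).isSelfAdjoint
  have hPP : ∀ y, P (P y) = (ContinuousLinearMap.adjoint S) (S y) := fun y =>
    DFunLike.congr_fun (CFC.abs_mul_abs S) y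
  have hnorm : ∀ y, ‖P y‖ = ‖S y‖ := by
    intro y
    have h1 : inner ℂ (P y) (P y) = (inner ℂ (S y) (S y) : ℂ) := by
      rw [← ContinuousLinearMap.adjoint_inner_right S, ← hPP,
        ← ContinuousLinearMap.adjoint_inner_right P, hPsa]
    rw [inner_self_eq_norm_sq_to_K, inner_self_eq_norm_sq_to_K] at h1
    have h2 : ‖P y‖ ^ 2 = ‖S y‖ ^ 2 := by exact_mod_cast h1
    exact (sq_eq_sq₀ (norm_nonneg _) (norm_nonneg _)).1 h2
  set K : Submodule ℂ H := LinearMap.ker (S : H →ₗ[ℂ] H) with hK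
  have hKmem : ∀ y, y ∈ K ↔ S y = 0 := fun y => by simp [hK]
  have hPker : ∀ y, P y = 0 ↔ S y = 0 := fun y => by
    rw [← norm_eq_zero, hnorm, norm_eq_zero]
  have d1 : DenseRange ((P : H →ₗ[ℂ] H).coprod K.subtype) :=
    denseRange_coprod P K fun y hy => by rwa [hPsa, hPker] at hy
  have d2 : DenseRange ((S : H →ₗ[ℂ] H).coprod K.subtype) :=
    denseRange_coprod S K fun y hy => (hS y).2 hy
  have hn : ∀ z, ‖((S : H →ₗ[ℂ] H).coprod K.subtype) (LinearEquiv.refl ℂ (H × K) z)‖ =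
      ‖((P : H →ₗ[ℂ] H).coprod K.subtype) z‖ := by
    rintro ⟨v, k, hk⟩
    have hk' := (hKmem k).1 hk
    have e1 : inner ℂ (S v) k = (0 : ℂ) := by
      rw [← ContinuousLinearMap.adjoint_inner_right, (hS k).1 hk', inner_zero_right]
    have e2 : inner ℂ (P v) k = (0 : ℂ) := by
      rw [← ContinuousLinearMap.adjoint_inner_right, hPsa, (hPker k).2 hk', inner_zero_right]
    have a1 := norm_add_sq_eq_norm_sq_add_norm_sq_of_inner_eq_zero (S v) k e1
    have a2 := norm_add_sq_eq_norm_sq_add_norm_sq_of_inner_eq_zero (P v) k e2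
    rw [hnorm, ← a1] at a2
    have := (mul_self_inj (norm_nonneg _) (norm_nonneg _)).1 a2
    simpa using this.symm
  refine ⟨(LinearEquiv.refl ℂ (H × K)).extendOfIsometry _ _ d1 d2 hn, fun y => ?_⟩
  have := LinearEquiv.extendOfIsometry_eq (LinearEquiv.refl ℂ (H × K)) _ _ d1 d2 hn (y, 0)
  simpa using this

/-- Every contraction is a sum of three unitaries. -/
lemma three_unitaries (T : H →L[ℂ] H) (hT : ‖T‖ ≤ 1) :
    ∃ U V W : H ≃ₗᵢ[ℂ] H, ∀ y, T y = U y + V y + W y := by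
  have hS : ∀ y, (T - 1) y = 0 ↔ (ContinuousLinearMap.adjoint (T - 1)) y = 0 := by
    intro y
    have e : (ContinuousLinearMap.adjoint (T - 1)) y = (ContinuousLinearMap.adjoint T) y - y := by
      have : ContinuousLinearMap.adjoint (1 : H →L[ℂ] H) = 1 := star_one (H →L[ℂ] H)
      rw [map_sub, this]; rfl
    have e' : (T - 1) y = T y - y := rfl
    rw [e, e', sub_eq_zero, sub_eq_zero]
    refine ⟨adjoint_fixed T hT y, fun h => ?_⟩
    have := adjoint_fixed (ContinuousLinearMap.adjoint T) (by simpa using hT) y h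
    simpa using this
  obtain ⟨W, hW⟩ := unitary_polar (T - 1) hS
  have hsa : IsSelfAdjoint ((2⁻¹ : ℝ) • CFC.abs (T - 1)) :=
    IsSelfAdjoint.smul (by simp [IsSelfAdjoint]) (CFC.abs_nonneg (T - 1)).isSelfAdjoint
  let a : selfAdjoint (H →L[ℂ] H) := ⟨(2⁻¹ : ℝ) • CFC.abs (T - 1), hsa⟩
  have ha : ‖a‖ ≤ 1 := by
    change ‖(2⁻¹ : ℝ) • CFC.abs (T - 1)‖ ≤ 1
    rw [norm_smul, CFC.norm_abs]
    have h1 : ‖T - 1‖ ≤ 1 + 1 :=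
      (norm_sub_le _ _).trans (add_le_add hT ContinuousLinearMap.norm_id_le)
    norm_num
    linarith
  let u := selfAdjoint.unitarySelfAddISMul a ha
  have hu : ∀ y, (u : H →L[ℂ] H) y + ((star u : unitary (H →L[ℂ] H)) : H →L[ℂ] H) y
      = CFC.abs (T - 1) y := by
    intro y
    have h1 : (u : H →L[ℂ] H) + ((star u : unitary (H →L[ℂ] H)) : H →L[ℂ] H)
        = CFC.abs (T - 1) := by
      have h2 := selfAdjoint.star_coe_unitarySelfAddISMul a ha
      have h3 := selfAdjoint.unitarySelfAddISMul_coe a ha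
      change _ + star (u : H →L[ℂ] H) = _
      rw [h2, h3]
      simp only [a]
      rw [add_add_sub_cancel, ← add_smul]
      norm_num
    exact DFunLike.congr_fun h1 y
  refine ⟨LinearIsometryEquiv.refl ℂ H, (Unitary.linearIsometryEquiv u).trans W,
    (Unitary.linearIsometryEquiv (star u)).trans W, fun y => ?_⟩
  have h1 := hW y
  rw [← hu, map_add] at h1
  have e' : (T - 1) y = T y - y := rfl
  rw [e', eq_sub_iff_add_eq] at h1
  rw [← h1]
  change _ = y + W ((u : H →L[ℂ] H) y) + W (((star u : unitary (H →L[ℂ] H)) : H →L[ℂ] H) y)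
  abel

/-- An infinite-dimensional separable Hilbert space has a basis indexed by `ℕ`. -/
lemma exists_nat_basis [TopologicalSpace.SeparableSpace H] (hinf : ¬ FiniteDimensional ℂ H) :
    Nonempty (HilbertBasis ℕ ℂ H) := by
  obtain ⟨w, b, hb⟩ := exists_hilbertBasis ℂ H
  have hcount : Countable w := by
    have hd : Pairwise (Function.onFun Disjoint fun i : w => Metric.ball (b i) (1 / 2)) := by
      intro i j hij
      apply Metric.ball_disjoint_ball
      have h1 := norm_sub_sq (𝕜 := ℂ) (b i) (b j)
      rw [b.orthonormal.2 hij, b.orthonormal.1, b.orthonormal.1] at h1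
      rw [dist_eq_norm]
      simp at h1
      nlinarith [norm_nonneg (b i - b j)]
    have := Set.PairwiseDisjoint.countable_of_isOpen (a := (Set.univ : Set w))
      (s := fun i : w => Metric.ball (b i) (1 / 2))
      (fun i _ j _ hij => hd hij) (fun i _ => Metric.isOpen_ball)
      (fun i _ => ⟨b i, Metric.mem_ball_self (by norm_num)⟩)
    exact Set.countable_univ_iff.1 this
  have hinfw : Infinite w := by
    by_contra hfin
    rw [not_infinite_iff_finite] at hfin
    have := Fintype.ofFinite w
    exact hinf b.toOrthonormalBasis.toBasis.finiteDimensional_of_finite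
  obtain ⟨e⟩ := nonempty_equiv_of_countable (α := ℕ) (β := w)
  refine ⟨HilbertBasis.mk (v := fun n => b (e n)) (b.orthonormal.comp e e.injective) ?_⟩
  have : Set.range (fun n => b (e n)) = Set.range b := e.surjective.range_comp b
  rw [this, b.dense_span]

lemma image_basis (b : HilbertBasis ℕ ℂ H) (U : H ≃ₗᵢ[ℂ] H) :
    Orthonormal ℂ (fun n => U (b n)) ∧
    (Submodule.span ℂ (Set.range fun n => U (b n))).topologicalClosure = ⊤ := by
  refine ⟨b.orthonormal.comp_linearIsometryEquiv U, ?_⟩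
  rw [Submodule.topologicalClosure_eq_top_iff, Submodule.eq_bot_iff]
  intro y hy
  rw [Submodule.mem_orthogonal] at hy
  have h : U.symm y = 0 := by
    have h0 := (Submodule.topologicalClosure_eq_top_iff).1 b.dense_span
    rw [Submodule.eq_bot_iff] at h0
    refine h0 _ ?_
    rw [Submodule.mem_orthogonal]
    intro v hv
    rw [← U.inner_map_map, U.apply_symm_apply]
    refine hy _ ?_
    induction hv using Submodule.span_induction with
    | mem v hv =>
      obtain ⟨n, rfl⟩ := hv
      exact Submodule.subset_span ⟨n, rfl⟩
    | zero => simp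
    | add v w _ _ h1 h2 => rw [map_add]; exact Submodule.add_mem _ h1 h2
    | smul c v _ h1 => rw [map_smul]; exact Submodule.smul_mem _ c h1
  simpa using h

lemma exists_contraction (b : HilbertBasis ℕ ℂ H) (x : ℕ → H)
    (hsum : ∀ h : H, Summable fun n => ‖(inner ℂ (x n) h : ℂ)‖ ^ (2 : ℝ))
    (hle : ∀ h : H, (∑' n, ‖(inner ℂ (x n) h : ℂ)‖ ^ (2 : ℝ)) ≤ ‖h‖ ^ (2 : ℝ)) :
    ∃ T : H →L[ℂ] H, ‖T‖ ≤ 1 ∧ ∀ n, T (b n) = x n := by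
  have hmem : ∀ h : H, Memℓp (fun n => (inner ℂ (x n) h : ℂ)) 2 := fun h =>
    memℓp_gen (by simpa using hsum h)
  let L : H →ₗ[ℂ] lp (fun _ : ℕ => ℂ) 2 :=
    { toFun := fun h => ⟨fun n => inner ℂ (x n) h, hmem h⟩
      map_add' := fun u v => by
        ext n
        exact inner_add_right (x n) u v
      map_smul' := fun c u => by
        ext n
        exact inner_smul_right (x n) u c }
  have hL : ∀ h, ‖L h‖ ≤ 1 * ‖h‖ := by
    intro h
    have h1 := lp.norm_rpow_eq_tsum (p := 2) (by norm_num) (L h)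
    have h2 : ‖L h‖ ^ (2 : ℝ) ≤ ‖h‖ ^ (2 : ℝ) := by
      refine le_trans (le_of_eq ?_) (hle h)
      have h3 : ∀ n, (L h) n = inner ℂ (x n) h := fun n => rfl
      simpa [h3] using h1
    rw [one_mul]
    exact (Real.rpow_le_rpow_iff (norm_nonneg _) (norm_nonneg _) (by norm_num)).1 h2
  let A : H →L[ℂ] H := LinearMap.mkContinuous (b.repr.symm.toLinearEquiv.toLinearMap ∘ₗ L) 1
    (fun h => by simpa using hL h)
  refine ⟨ContinuousLinearMap.adjoint A, ?_, fun n => ?_⟩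
  · simpa using LinearMap.mkContinuous_norm_le _ zero_le_one _
  · refine ext_inner_right ℂ fun v => ?_
    rw [ContinuousLinearMap.adjoint_inner_left, ← b.repr_apply_apply]
    change b.repr (b.repr.symm (L v)) n = _
    rw [LinearIsometryEquiv.apply_symm_apply]
    rfl

end Helpers

/-- in an infinite-dimensional separable complex Hilbert space, every
sequence `(x_n)` with weak-`ℓ²` norm at most `1` (i.e. `∑_n |⟨x_n, h⟩|² ≤ ‖h‖²` for
all `h`) is the sum of three orthonormal bases: `x_n = f_n + g_n + h_n`. -/
theorem stmt12 (H : Type*) [NormedAddCommGroup H] [InnerProductSpace ℂ H]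
    [CompleteSpace H] [TopologicalSpace.SeparableSpace H]
    (hinf : ¬ FiniteDimensional ℂ H)
    (x : ℕ → H)
    (hsum : ∀ h : H, Summable fun n => ‖(inner ℂ (x n) h : ℂ)‖ ^ (2 : ℝ))
    (hle : ∀ h : H, (∑' n, ‖(inner ℂ (x n) h : ℂ)‖ ^ (2 : ℝ)) ≤ ‖h‖ ^ (2 : ℝ)) :
    ∃ f g k : ℕ → H,
      Orthonormal ℂ f ∧ (Submodule.span ℂ (Set.range f)).topologicalClosure = ⊤ ∧
      Orthonormal ℂ g ∧ (Submodule.span ℂ (Set.range g)).topologicalClosure = ⊤ ∧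
      Orthonormal ℂ k ∧ (Submodule.span ℂ (Set.range k)).topologicalClosure = ⊤ ∧
      ∀ n, x n = f n + g n + k n := by
  obtain ⟨b⟩ := exists_nat_basis hinf
  obtain ⟨T, hT, hTb⟩ := exists_contraction b x hsum hle
  obtain ⟨U, V, W, h⟩ := three_unitaries T hT
  exact ⟨fun n => U (b n), fun n => V (b n), fun n => W (b n),
    (image_basis b U).1, (image_basis b U).2, (image_basis b V).1, (image_basis b V).2,
    (image_basis b W).1, (image_basis b W).2, fun n => by rw [← hTb, h]⟩
end

section
/- Let H be an infinite-dimensional separable complex Hilbert space, (Ω, 𝔐, μ) a measure space, φ and Φ as in the context, and 𝒜 : Ω → B(H) such that t ↦ ⟨𝒜_t x, y⟩ is measurable for all x, y ∈ H. If for every pair of orthonormal bases (e_n)_{n=1}^∞ and (f_n)_{n=1}^∞ of H one has ∫_Ω Φ((⟨𝒜_t e_n, f_n⟩)_{n=1}^∞) dμ(t) < +∞, then for all sequences (x_n)_{n=1}^∞ and (y_n)_{n=1}^∞ in H that are weakly 2-summable with ‖(x_n)‖_{2,w} ≤ 1 and ‖(y_n)‖_{2,w} ≤ 1, one also has ∫_Ω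 Φ((⟨𝒜_t x_n, y_n⟩)_{n=1}^∞) dμ(t) < +∞. -/
open MeasureTheory ENNReal

/-- The extension `Φ` of a norm `φ` on finitely supported sequences to arbitrary
complex sequences: `Φ((a_n)) = sup_N φ(a_0, …, a_{N-1}, 0, 0, …) ∈ [0, ∞]`. -/
noncomputable def Phi (φ : (ℕ →₀ ℂ) → ℝ) (a : ℕ → ℂ) : ℝ≥0∞ :=
  ⨆ N : ℕ, ENNReal.ofReal (φ (∑ n ∈ Finset.range N, Finsupp.single n (a n)))

lemma aux_measurable (φ : (ℕ →₀ ℂ) → ℝ)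
    (hφ_add : ∀ a b, φ (a + b) ≤ φ a + φ b)
    (hφ_smul : ∀ (c : ℂ) (a), φ (c • a) = ‖c‖ * φ a) :
    Measurable (Phi φ) := by
  unfold Phi
  refine Measurable.iSup fun N => ENNReal.measurable_ofReal.comp ?_
  let p : Seminorm ℂ (ℕ →₀ ℂ) := Seminorm.of φ hφ_add hφ_smul
  have hp : ∀ a, p a = φ a := fun a => rfl
  have hc : Continuous fun a : ℕ → ℂ => φ (∑ n ∈ Finset.range N, Finsupp.single n (a n)) := by
    rw [continuous_iff_continuousAt]
    intro b
    have hlim : Filter.Tendsto (fun a : ℕ → ℂ => ∑ n ∈ Finset.range N, ‖a n - b n‖ * p (Finsupp.single n 1))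
        (nhds b) (nhds 0) := by
      have : Continuous (fun a : ℕ → ℂ => ∑ n ∈ Finset.range N, ‖a n - b n‖ * p (Finsupp.single n 1)) := by
        fun_prop
      simpa using this.tendsto b
    rw [ContinuousAt, tendsto_iff_norm_sub_tendsto_zero]
    refine squeeze_zero (fun _ => norm_nonneg _) (fun a => ?_) hlim
    rw [← hp, ← hp]
    refine (Real.norm_eq_abs _).le.trans ((abs_sub_map_le_sub p _ _).trans ?_)
    rw [← Finset.sum_sub_distrib]
    refine (Finset.le_sum_of_subadditive p (map_zero p).le (map_add_le_add p) _ _).trans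
      (Finset.sum_le_sum fun n _ => le_of_eq ?_)
    rw [← Finsupp.single_sub]
    have h1 : ‖a n - b n‖ * p (Finsupp.single n 1) = p ((a n - b n) • Finsupp.single n 1) :=
      (map_smul_eq_mul p _ _).symm
    simpa using h1.symm
  exact hc.measurable

lemma aux_add (φ : (ℕ →₀ ℂ) → ℝ) (h0 : ∀ a, 0 ≤ φ a)
    (hφ_add : ∀ a b, φ (a + b) ≤ φ a + φ b) (a b : ℕ → ℂ) :
    Phi φ (fun n => a n + b n) ≤ Phi φ a + Phi φ b := by
  unfold Phi
  refine iSup_le fun N => ?_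
  simp only [Finsupp.single_add, Finset.sum_add_distrib]
  refine (ENNReal.ofReal_le_ofReal (hφ_add _ _)).trans ?_
  rw [ENNReal.ofReal_add (h0 _) (h0 _)]
  exact add_le_add (le_iSup (fun N => ENNReal.ofReal (φ (∑ n ∈ Finset.range N, Finsupp.single n (a n)))) N)
    (le_iSup (fun N => ENNReal.ofReal (φ (∑ n ∈ Finset.range N, Finsupp.single n (b n)))) N)

lemma aux_smul (φ : (ℕ →₀ ℂ) → ℝ)
    (hφ_smul : ∀ (c : ℂ) (a), φ (c • a) = ‖c‖ * φ a) (c : ℂ) (a : ℕ → ℂ) :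
    Phi φ (fun n => c * a n) ≤ ENNReal.ofReal ‖c‖ * Phi φ a := by
  unfold Phi
  refine iSup_le fun N => ?_
  have : ∑ n ∈ Finset.range N, Finsupp.single n (c * a n)
      = c • ∑ n ∈ Finset.range N, Finsupp.single n (a n) := by
    simp [Finset.smul_sum]
  rw [this, hφ_smul, ENNReal.ofReal_mul (norm_nonneg _)]
  gcongr
  exact le_iSup (fun N => ENNReal.ofReal (φ (∑ n ∈ Finset.range N, Finsupp.single n (a n)))) N

lemma aux_basis (H : Type*) [NormedAddCommGroup H] [InnerProductSpace ℂ H]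
    [CompleteSpace H] [TopologicalSpace.SeparableSpace H]
    (hinf : ¬ FiniteDimensional ℂ H) : Nonempty (HilbertBasis ℕ ℂ H) := by
  obtain ⟨w, b, hb⟩ := exists_hilbertBasis ℂ H
  have ho : Orthonormal ℂ b := b.orthonormal
  have hcount : Countable w := by
    refine Pairwise.countable_of_isOpen_disjoint (s := fun i : w => Metric.ball (b i) (1/2)) ?_
      (fun i => Metric.isOpen_ball) (fun i => ⟨b i, by simp⟩)
    intro i j hij
    refine Metric.ball_disjoint_ball ?_
    have h2 : ‖b i - b j‖ ^ 2 = 2 := by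
      rw [@norm_sub_sq ℂ, ho.2 hij, ho.1, ho.1]; norm_num
    rw [dist_eq_norm]
    nlinarith [norm_nonneg (b i - b j)]
  have hinfw : Infinite w := by
    by_contra h
    rw [not_infinite_iff_finite] at h
    have := Fintype.ofFinite w
    exact hinf (b.toOrthonormalBasis.toBasis.finiteDimensional_of_finite)
  obtain ⟨e⟩ := nonempty_equiv_of_countable (α := ℕ) (β := w)
  refine ⟨HilbertBasis.mk (v := b ∘ e) (ho.comp e e.injective) ?_⟩
  rw [e.surjective.range_comp, b.dense_span]

lemma aux_op {H : Type*} [NormedAddCommGroup H] [InnerProductSpace ℂ H]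
    [CompleteSpace H] (g : HilbertBasis ℕ ℂ H) (x : ℕ → H)
    (hs : ∀ h : H, Summable fun n => ‖(inner ℂ (x n) h : ℂ)‖ ^ (2 : ℝ))
    (hb : ∀ h : H, (∑' n, ‖(inner ℂ (x n) h : ℂ)‖ ^ (2 : ℝ)) ≤ ‖h‖ ^ (2 : ℝ)) :
    ∃ X : H →L[ℂ] H, ∀ n, X (g n) = x n := by
  let T : H →ₗ[ℂ] lp (fun _ : ℕ => ℂ) 2 :=
    { toFun := fun h => ⟨fun n => inner ℂ (x n) h, memℓp_gen (by simpa using hs h)⟩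
      map_add' := fun a b => by ext n; exact inner_add_right _ _ _
      map_smul' := fun c a => by ext n; exact inner_smul_right _ _ _ }
  have hT : ∀ h, ‖T h‖ ≤ 1 * ‖h‖ := fun h => by
    rw [one_mul]
    refine lp.norm_le_of_tsum_le (by simp) (norm_nonneg _) ?_
    simpa [T] using hb h
  let Z : H →L[ℂ] H := (g.repr.symm : lp (fun _ : ℕ => ℂ) 2 →L[ℂ] H) ∘L T.mkContinuous 1 hT
  refine ⟨ContinuousLinearMap.adjoint Z, fun n => ext_inner_right ℂ fun h => ?_⟩
  rw [ContinuousLinearMap.adjoint_inner_left, ← g.repr_apply_apply]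
  simp [Z, T]

lemma aux_unitary {H : Type*} [NormedAddCommGroup H] [InnerProductSpace ℂ H]
    [CompleteSpace H] (g : HilbertBasis ℕ ℂ H) (U : H →L[ℂ] H) (hU : U ∈ unitary (H →L[ℂ] H)) :
    Orthonormal ℂ (fun n => U (g n)) ∧
      (Submodule.span ℂ (Set.range fun n => U (g n))).topologicalClosure = ⊤ := by
  let V := Unitary.linearIsometryEquiv (𝕜 := ℂ) ⟨U, hU⟩
  let g' : HilbertBasis ℕ ℂ H := HilbertBasis.ofRepr (V.symm.trans g.repr)
  have hg : (g' : ℕ → H) = fun n => U (g n) := by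
    funext n
    rw [← g'.repr_symm_single, ← g.repr_symm_single]
    rfl
  rw [← hg]
  exact ⟨g'.orthonormal, g'.dense_span⟩

/-- let `φ` be a symmetric norming function on finitely supported
sequences (normalized, permutation- and absolute-value-invariant, monotone) and `Φ`
its extension. If `𝒜 : Ω → B(H)` has measurable matrix coefficients and
`∫_Ω Φ((⟨𝒜_t e_n, f_n⟩)_n) dμ < ∞` for every pair of orthonormal bases `(e_n)`,
`(f_n)`, then the same holds for all weakly `2`-summable sequences `(x_n)`, `(y_n)`
with `‖(x_n)‖_{2,w} ≤ 1` and `‖(y_n)‖_{2,w} ≤ 1`. -/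
theorem stmt13 (H : Type*) [NormedAddCommGroup H] [InnerProductSpace ℂ H]
    [CompleteSpace H] [TopologicalSpace.SeparableSpace H]
    (hinf : ¬ FiniteDimensional ℂ H)
    {Ω : Type*} [MeasurableSpace Ω] (μ : Measure Ω)
    (φ : (ℕ →₀ ℂ) → ℝ)
    (hφ_nonneg : ∀ a, 0 ≤ φ a)
    (hφ_def : ∀ a, φ a = 0 ↔ a = 0)
    (hφ_add : ∀ a b, φ (a + b) ≤ φ a + φ b)
    (hφ_smul : ∀ (c : ℂ) (a), φ (c • a) = ‖c‖ * φ a)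
    (hφ_one : φ (Finsupp.single 0 1) = 1)
    (hφ_perm : ∀ (σ : Equiv.Perm ℕ) (a), φ (Finsupp.equivMapDomain σ a) = φ a)
    (hφ_abs : ∀ a, φ (Finsupp.mapRange (fun z : ℂ => (‖z‖ : ℂ)) (by simp) a) = φ a)
    (hφ_mono : ∀ a b : ℕ →₀ ℂ, (∀ n, ‖a n‖ ≤ ‖b n‖) → φ a ≤ φ b)
    (𝒜 : Ω → (H →L[ℂ] H))
    (hmeas : ∀ x y : H, Measurable (fun t => (inner ℂ y (𝒜 t x) : ℂ)))
    (hONB : ∀ e f : ℕ → H,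
      Orthonormal ℂ e → (Submodule.span ℂ (Set.range e)).topologicalClosure = ⊤ →
      Orthonormal ℂ f → (Submodule.span ℂ (Set.range f)).topologicalClosure = ⊤ →
      ∫⁻ t, Phi φ (fun n => (inner ℂ (f n) (𝒜 t (e n)) : ℂ)) ∂μ < ⊤) :
    ∀ x y : ℕ → H,
      (∀ h : H, Summable fun n => ‖(inner ℂ (x n) h : ℂ)‖ ^ (2 : ℝ)) →
      (∀ h : H, (∑' n, ‖(inner ℂ (x n) h : ℂ)‖ ^ (2 : ℝ)) ≤ ‖h‖ ^ (2 : ℝ)) →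
      (∀ h : H, Summable fun n => ‖(inner ℂ (y n) h : ℂ)‖ ^ (2 : ℝ)) →
      (∀ h : H, (∑' n, ‖(inner ℂ (y n) h : ℂ)‖ ^ (2 : ℝ)) ≤ ‖h‖ ^ (2 : ℝ)) →
      ∫⁻ t, Phi φ (fun n => (inner ℂ (y n) (𝒜 t (x n)) : ℂ)) ∂μ < ⊤ := by
  intro x y hx1 hx2 hy1 hy2
  obtain ⟨g⟩ := aux_basis H hinf
  obtain ⟨X, hX⟩ := aux_op g x hx1 hx2
  obtain ⟨Y, hY⟩ := aux_op g y hy1 hy2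
  have hM := aux_measurable φ hφ_add hφ_smul
  have hm : ∀ X Y : H →L[ℂ] H, Measurable
      (fun t => Phi φ (fun n => (inner ℂ (Y (g n)) (𝒜 t (X (g n))) : ℂ))) := fun X Y =>
    hM.comp (measurable_pi_lambda _ fun n => hmeas _ _)
  have hz : Phi φ (fun _ => 0) = 0 := by
    simp [Phi, (hφ_def 0).2 rfl]
  have key : ∀ X Y : H →L[ℂ] H,
      ∫⁻ t, Phi φ (fun n => (inner ℂ (Y (g n)) (𝒜 t (X (g n))) : ℂ)) ∂μ < ⊤ := by
    intro X Y
    have hXm : X ∈ Submodule.span ℂ (unitary (H →L[ℂ] H) : Set (H →L[ℂ] H)) := by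
      rw [CStarAlgebra.span_unitary]; trivial
    have hYm : Y ∈ Submodule.span ℂ (unitary (H →L[ℂ] H) : Set (H →L[ℂ] H)) := by
      rw [CStarAlgebra.span_unitary]; trivial
    induction hXm using Submodule.span_induction with
    | zero => simp [hz]
    | add U V _ _ hU hV =>
      refine lt_of_le_of_lt (lintegral_mono fun t => ?_)
        ((lintegral_add_left (hm U Y) _).trans_lt (ENNReal.add_lt_top.2 ⟨hU, hV⟩))
      simpa [inner_add_right] using aux_add φ hφ_nonneg hφ_add _ _
    | smul c U _ hU =>
      refine lt_of_le_of_lt (lintegral_mono fun t => ?_)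
        ((lintegral_const_mul (ENNReal.ofReal ‖c‖) (hm U Y)).trans_lt
          (ENNReal.mul_lt_top ENNReal.ofReal_lt_top hU))
      have := aux_smul φ hφ_smul c (fun n => (inner ℂ (Y (g n)) (𝒜 t (U (g n))) : ℂ))
      simpa only [smul_apply, map_smul, inner_smul_right] using this
    | mem U hU =>
      induction hYm using Submodule.span_induction with
      | zero => simp [hz]
      | add V W _ _ hV hW =>
        refine lt_of_le_of_lt (lintegral_mono fun t => ?_)
          ((lintegral_add_left (hm U V) _).trans_lt (ENNReal.add_lt_top.2 ⟨hV, hW⟩))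
        simpa [inner_add_left] using aux_add φ hφ_nonneg hφ_add _ _
      | smul c V _ hV =>
        refine lt_of_le_of_lt (lintegral_mono fun t => ?_)
          ((lintegral_const_mul (ENNReal.ofReal ‖(starRingEnd ℂ) c‖) (hm U V)).trans_lt
            (ENNReal.mul_lt_top ENNReal.ofReal_lt_top hV))
        have := aux_smul φ hφ_smul ((starRingEnd ℂ) c)
          (fun n => (inner ℂ (V (g n)) (𝒜 t (U (g n))) : ℂ))
        simpa only [smul_apply, inner_smul_left] using this
      | mem V hV =>
        obtain ⟨h1, h2⟩ := aux_unitary g U hU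
        obtain ⟨h3, h4⟩ := aux_unitary g V hV
        exact hONB _ _ h1 h2 h3 h4
  have := key X Y
  simpa only [hX, hY] using this
end

section
/- Let K be a compact Hausdorff space, (X, ν) a measure space, 1 ≤ p ≤ q < ∞ with 1 < q, and (Ω, 𝔐, μ) a measure space. Let 𝒜 : Ω → B(C(K,ℝ), L^q(X,ν)) be such that for every f ∈ C(K,ℝ) and every g ∈ L^{q'}(X,ν) the function t ↦ ∫_X (𝒜_t f)·g dν is integrable on Ω, and suppose each 𝒜_t is a positive operator (f ≥ 0 implies 𝒜_t f ≥ 0 ν-a.e.). Then for every S ∈ 𝔐 the Gel'fand integral ∫_S 𝒜 dμ — the unique bounded operator I_S : C(K,ℝ) → L^q(X,ν) with ∫_X (I_S f)·g dν = ∫_S (∫_X (𝒜_t f)·g dν) dμ(t) for all f ∈ C(K,ℝ), g ∈ L^{q'}(X,ν) — exists and is a (q,p)-summing operator. -/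
open MeasureTheory ENNReal

/-- A bounded operator between real Banach spaces is `(q,p)`-summing. -/
def IsSummingQPReal (q p : ℝ) {E F : Type*} [NormedAddCommGroup E] [NormedSpace ℝ E]
    [NormedAddCommGroup F] [NormedSpace ℝ F] (T : E →L[ℝ] F) : Prop :=
  ∃ C : ℝ, 0 ≤ C ∧ ∀ (n : ℕ) (x : Fin n → E),
    (∑ k, ‖T (x k)‖ ^ q) ^ (1 / q) ≤
      C * ⨆ φ : {φ : StrongDual ℝ E // ‖φ‖ ≤ 1},
        (∑ k, ‖(φ : StrongDual ℝ E) (x k)‖ ^ p) ^ (1 / p)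

set_option linter.unusedSectionVars false
section aux
open Filter Topology

variable {X : Type*} [MeasurableSpace X] {ν : Measure X} {P R : ℝ≥0∞}
  [Fact (1 ≤ P)] [Fact (1 ≤ R)] [ENNReal.HolderConjugate P R]

/-- The duality pairing. -/
noncomputable def prB (ν : Measure X) (P R : ℝ≥0∞) [Fact (1 ≤ P)] [Fact (1 ≤ R)]
    [ENNReal.HolderConjugate P R] : Lp ℝ P ν →L[ℝ] Lp ℝ R ν →L[ℝ] ℝ :=
  (ContinuousLinearMap.mul ℝ ℝ).lpPairing ν P R

lemma prB_apply (h : Lp ℝ P ν) (g : Lp ℝ R ν) :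
    prB ν P R h g = ∫ x, (h : X → ℝ) x * (g : X → ℝ) x ∂ν := by
  simp [prB, ContinuousLinearMap.lpPairing_eq_integral]

lemma pr_integrable (h : Lp ℝ P ν) (g : Lp ℝ R ν) :
    Integrable (fun x => (h : X → ℝ) x * (g : X → ℝ) x) ν :=
  (Lp.memLp h).integrable_mul (Lp.memLp g)

lemma prB_nonneg {h : Lp ℝ P ν} {g : Lp ℝ R ν} (hh : 0 ≤ h) (hg : 0 ≤ g) :
    0 ≤ prB ν P R h g := by
  rw [prB_apply]
  apply integral_nonneg_of_ae
  filter_upwards [(Lp.coeFn_nonneg h).2 hh, (Lp.coeFn_nonneg g).2 hg] with x h1 h2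
  exact mul_nonneg h1 h2

lemma prB_indicator (h : Lp ℝ P ν) {s : Set X} (hs : MeasurableSet s) (hμ : ν s ≠ ∞) (c : ℝ) :
    prB ν P R h (indicatorConstLp R hs hμ c) = c * ∫ x in s, (h : X → ℝ) x ∂ν := by
  rw [prB_apply, ← integral_const_mul, ← integral_indicator hs]
  apply integral_congr_ae
  filter_upwards [indicatorConstLp_coeFn (p := R) (hs := hs) (hμs := hμ) (c := c)] with x hx
  rw [hx]
  by_cases hxs : x ∈ s <;> simp [hxs, mul_comm]

lemma indLp_nonneg {s : Set X} (hs : MeasurableSet s) (hμ : ν s ≠ ∞) {c : ℝ} (hc : 0 ≤ c) :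
    0 ≤ indicatorConstLp R hs hμ c := by
  rw [← Lp.coeFn_nonneg]
  filter_upwards [indicatorConstLp_coeFn (p := R) (hs := hs) (hμs := hμ) (c := c)] with x hx
  rw [hx]
  exact Set.indicator_nonneg (fun _ _ => hc) x

lemma nonneg_of_prB (hP : P ≠ ∞) (h : Lp ℝ P ν)
    (H : ∀ g : Lp ℝ R ν, 0 ≤ g → 0 ≤ prB ν P R h g) : 0 ≤ h := by
  have h1 : (1 : ℝ≥0∞) ≤ P := Fact.out
  rw [← Lp.coeFn_nonneg]
  refine (Lp.finStronglyMeasurable h (by positivity) hP).aefinStronglyMeasurable.ae_nonneg_of_forall_setIntegral_nonneg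
    (fun s hs hμ => ?_) (fun s hs hμ => ?_)
  · exact integrableOn_Lp_of_measure_ne_top h h1 hμ.ne
  · have := H _ (indLp_nonneg hs hμ.ne zero_le_one)
    rwa [prB_indicator, one_mul] at this

lemma eq_of_prB (hP : P ≠ ∞) (h h' : Lp ℝ P ν)
    (H : ∀ g : Lp ℝ R ν, prB ν P R h g = prB ν P R h' g) : h = h' := by
  apply le_antisymm
  · rw [← sub_nonneg]
    exact nonneg_of_prB (R := R) hP _ (fun g _ => by simp [H])
  · rw [← sub_nonneg]
    exact nonneg_of_prB (R := R) hP _ (fun g _ => by simp [H])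

lemma norm_rpow_eq (hP : P ≠ ∞) (h : Lp ℝ P ν) :
    ‖h‖ ^ P.toReal = ∫ x, |(h : X → ℝ) x| ^ P.toReal ∂ν := by
  have h1 : (1 : ℝ≥0∞) ≤ P := Fact.out
  have h0 : P ≠ 0 := by positivity
  have hpos : 0 < P.toReal := ENNReal.toReal_pos h0 hP
  have hn : 0 ≤ ∫ x, |(h : X → ℝ) x| ^ P.toReal ∂ν := integral_nonneg (fun x => by positivity)
  rw [Lp.norm_def, (Lp.memLp h).eLpNorm_eq_integral_rpow_norm h0 hP]
  simp only [Real.norm_eq_abs]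
  rw [ENNReal.toReal_ofReal (by positivity), ← Real.rpow_mul hn, inv_mul_cancel₀ hpos.ne', Real.rpow_one]

lemma rpow_integrable (hP : P ≠ ∞) (h : Lp ℝ P ν) :
    Integrable (fun x => |(h : X → ℝ) x| ^ P.toReal) ν := by
  have h1 : (1 : ℝ≥0∞) ≤ P := Fact.out
  exact (Lp.memLp h).integrable_norm_rpow (by positivity) hP

lemma superadd (hP : P ≠ ∞) {h k : Lp ℝ P ν} (hh : 0 ≤ h) (hk : 0 ≤ k) :
    ‖h‖ ^ P.toReal + ‖k‖ ^ P.toReal ≤ ‖h + k‖ ^ P.toReal := by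
  have h1 : (1 : ℝ≥0∞) ≤ P := Fact.out
  rw [norm_rpow_eq hP, norm_rpow_eq hP, norm_rpow_eq hP,
    ← integral_add (rpow_integrable hP h) (rpow_integrable hP k)]
  apply integral_mono_ae ((rpow_integrable hP h).add (rpow_integrable hP k)) (rpow_integrable hP _)
  filter_upwards [(Lp.coeFn_nonneg h).2 hh, (Lp.coeFn_nonneg k).2 hk, Lp.coeFn_add h k] with x a b c
  simp only [Pi.zero_apply] at a b
  simp only [c, Pi.add_apply, abs_of_nonneg a, abs_of_nonneg b, abs_of_nonneg (add_nonneg a b)]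
  apply Real.add_rpow_le_rpow_add a b
  simpa using (ENNReal.toReal_le_toReal (by simp) hP).2 h1

lemma exists_norming (hP : P ≠ ∞) (hR : R ≠ ∞) {h : Lp ℝ P ν} (hh : 0 ≤ h) :
    ∃ g : Lp ℝ R ν, 0 ≤ g ∧ prB ν P R h g = ‖h‖ ^ P.toReal ∧ ‖g‖ = ‖h‖ ^ (P.toReal - 1) := by
  have hc : P.toReal.HolderConjugate R.toReal := ENNReal.HolderConjugate.toReal_of_ne_top hP hR
  have hq : 0 < P.toReal - 1 := hc.sub_one_pos
  have hPR : R * ENNReal.ofReal (P.toReal - 1) = P := by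
    rw [← ENNReal.ofReal_toReal hR, ← ENNReal.ofReal_mul (by positivity)]
    conv_rhs => rw [← ENNReal.ofReal_toReal hP]
    congr 1
    rw [mul_comm]
    exact hc.sub_one_mul_conj
  have hN : eLpNorm (fun x => ‖(h : X → ℝ) x‖ ^ (P.toReal - 1)) R ν
      = eLpNorm h P ν ^ (P.toReal - 1) := by
    rw [eLpNorm_norm_rpow _ hq, hPR]
  have hm : MemLp (fun x => ‖(h : X → ℝ) x‖ ^ (P.toReal - 1)) R ν := by
    refine ⟨((Lp.memLp h).1.norm.aemeasurable.pow_const _).aestronglyMeasurable, ?_⟩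
    rw [hN]
    exact ENNReal.rpow_lt_top_of_nonneg hq.le (Lp.memLp h).2.ne
  refine ⟨hm.toLp _, ?_, ?_, ?_⟩
  · rw [← Lp.coeFn_nonneg]
    filter_upwards [hm.coeFn_toLp] with x hx
    rw [hx]
    simp only [Pi.zero_apply]
    positivity
  · rw [prB_apply, norm_rpow_eq hP]
    apply integral_congr_ae
    filter_upwards [hm.coeFn_toLp, (Lp.coeFn_nonneg h).2 hh] with x hx h0
    rw [hx, Real.norm_eq_abs, abs_of_nonneg h0]
    simp only [Pi.zero_apply] at h0
    rcases h0.eq_or_lt with h0 | h0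
    · rw [← h0, Real.zero_rpow hc.ne_zero]; simp
    · nth_rw 1 [← Real.rpow_one ((h : X → ℝ) x)]
      rw [← Real.rpow_add h0]; simp
  · rw [Lp.norm_toLp, hN, Lp.norm_def, ENNReal.toReal_rpow]

lemma norm_le_of_dom (hP : P ≠ ∞) (hR : R ≠ ∞) (φ : Lp ℝ R ν →L[ℝ] ℝ) {h : Lp ℝ P ν} (hh : 0 ≤ h)
    (hd : ∀ g : Lp ℝ R ν, 0 ≤ g → prB ν P R h g ≤ φ g) : ‖h‖ ≤ ‖φ‖ := by
  obtain ⟨g, g0, g1, g2⟩ := exists_norming hP hR hh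
  rcases (norm_nonneg h).eq_or_lt with h0 | h0
  · rw [← h0]; positivity
  have h3 := (hd g g0).trans ((le_abs_self _).trans (φ.le_opNorm g))
  rw [g1, g2] at h3
  have : ‖h‖ ^ P.toReal = ‖h‖ * ‖h‖ ^ (P.toReal - 1) := by
    nth_rw 2 [← Real.rpow_one ‖h‖]
    rw [← Real.rpow_add h0]; simp
  rw [this] at h3
  exact le_of_mul_le_mul_right h3 (by positivity)

lemma ind_congr {s t : Set X} (hs : MeasurableSet s) (hμs : ν s ≠ ∞) (ht : MeasurableSet t)
    (hμt : ν t ≠ ∞) (h : s = t) (c : ℝ) : indicatorConstLp R hs hμs c = indicatorConstLp R ht hμt c := by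
  subst h; rfl

lemma exists_measure (hR : R ≠ ∞) (ψ : Lp ℝ R ν →L[ℝ] ℝ) (hψ : ∀ g : Lp ℝ R ν, 0 ≤ g → 0 ≤ ψ g)
    {A : Set X} (hA : MeasurableSet A) (hμA : ν A ≠ ∞) :
    ∃ m : Measure X, ∀ E (hE : MeasurableSet E), m E =
      ENNReal.ofReal (ψ (indicatorConstLp R (hE.inter hA)
        (measure_ne_top_of_subset Set.inter_subset_right hμA) 1)) := by
  refine ⟨Measure.ofMeasurable (fun E hE => ENNReal.ofReal (ψ (indicatorConstLp R (hE.inter hA)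
        (measure_ne_top_of_subset Set.inter_subset_right hμA) 1))) ?_ ?_,
        fun E hE => Measure.ofMeasurable_apply E hE⟩
  · rw [ind_congr _ _ MeasurableSet.empty (by simp) (by simp)]
    simp
  · intro f hf hd
    have hfin : ∀ E : Set X, ν (E ∩ A) ≠ ∞ := fun E =>
      measure_ne_top_of_subset Set.inter_subset_right hμA
    have hU : ∀ n, MeasurableSet (⋃ i ∈ Finset.range n, f i) := fun n =>
      Finset.measurableSet_biUnion _ (fun i _ => hf i)
    have hsum : ∀ n, ∑ i ∈ Finset.range n, ψ (indicatorConstLp R ((hf i).inter hA) (hfin _) 1) =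
        ψ (indicatorConstLp R ((hU n).inter hA) (hfin _) 1) := by
      intro n
      induction n with
      | zero =>
        rw [ind_congr _ _ MeasurableSet.empty (by simp) (by simp)]
        simp
      | succ n ih =>
        rw [Finset.sum_range_succ, ih, ← map_add, ← indicatorConstLp_disjoint_union]
        · congr 1
          apply ind_congr
          rw [← Set.union_inter_distrib_right]
          congr 1
          rw [Finset.range_add_one, Finset.set_biUnion_insert, Set.union_comm]
        · apply Disjoint.mono Set.inter_subset_left Set.inter_subset_left
          rw [Set.disjoint_iUnion₂_left]
          intro i hi
          exact hd (Finset.mem_range.1 hi).ne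
    have hS : HasSum (fun i => ψ (indicatorConstLp R ((hf i).inter hA) (hfin _) 1))
        (ψ (indicatorConstLp R ((MeasurableSet.iUnion hf).inter hA) (hfin _) 1)) := by
      rw [hasSum_iff_tendsto_nat_of_nonneg (fun n => hψ _ (indLp_nonneg _ _ zero_le_one))]
      simp_rw [hsum]
      refine (ψ.continuous.tendsto _).comp (tendsto_indicatorConstLp_set hR ?_)
      have hsub : ∀ n, (⋃ i ∈ Finset.range n, f i) ⊆ ⋃ i, f i := fun n =>
        Set.iUnion₂_subset (fun i _ => Set.subset_iUnion f i)
      have he : ∀ n, symmDiff ((⋃ i ∈ Finset.range n, f i) ∩ A) ((⋃ i, f i) ∩ A) =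
          ((⋃ i, f i) \ (⋃ i ∈ Finset.range n, f i)) ∩ A := by
        intro n
        rw [symmDiff_of_le (Set.inter_subset_inter_left _ (hsub n)), Set.inter_sdiff_distrib_right]
      simp_rw [he]
      have h0 : ⋂ n, ((⋃ i, f i) \ (⋃ i ∈ Finset.range n, f i)) ∩ A = ∅ := by
        ext x
        simp only [Set.mem_iInter, Set.mem_inter_iff, Set.mem_sdiff, Set.mem_iUnion, Finset.mem_range,
          Set.mem_empty_iff_false, iff_false]
        intro hx
        obtain ⟨i, hi⟩ := (hx 0).1.1
        exact (hx (i + 1)).1.2 ⟨i, Nat.lt_succ_self i, hi⟩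
      have := tendsto_measure_iInter_atTop (μ := ν)
        (s := fun n => ((⋃ i, f i) \ (⋃ i ∈ Finset.range n, f i)) ∩ A)
        (fun n => (((MeasurableSet.iUnion hf).diff (hU n)).inter hA).nullMeasurableSet)
        (fun a b hab => Set.inter_subset_inter_left _ (Set.sdiff_subset_sdiff_right
          (Set.biUnion_subset_biUnion_left (Finset.range_mono hab)))) ⟨0, hfin _⟩
      rwa [h0, measure_empty] at this
    rw [← ENNReal.ofReal_tsum_of_nonneg (fun n => hψ _ (indLp_nonneg _ _ zero_le_one)) hS.summable,
      hS.tsum_eq]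

lemma ind_mono {s t : Set X} (hs : MeasurableSet s) (hμs : ν s ≠ ∞) (ht : MeasurableSet t)
    (hμt : ν t ≠ ∞) (h : s ⊆ t) : indicatorConstLp R hs hμs (1 : ℝ) ≤ indicatorConstLp R ht hμt 1 := by
  rw [← Lp.coeFn_le]
  filter_upwards [indicatorConstLp_coeFn (p := R) (hs := hs) (hμs := hμs) (c := (1 : ℝ)),
    indicatorConstLp_coeFn (p := R) (hs := ht) (hμs := hμt) (c := (1 : ℝ))] with x h1 h2
  rw [h1, h2]
  exact Set.indicator_le_indicator_of_subset h (fun _ => zero_le_one) x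

lemma ind_smul {s : Set X} (hs : MeasurableSet s) (hμs : ν s ≠ ∞) (a c : ℝ) :
    a • indicatorConstLp R hs hμs c = indicatorConstLp R hs hμs (a * c) := by
  ext1
  filter_upwards [indicatorConstLp_coeFn (p := R) (hs := hs) (hμs := hμs) (c := c),
    indicatorConstLp_coeFn (p := R) (hs := hs) (hμs := hμs) (c := a * c),
    Lp.coeFn_smul a (indicatorConstLp R hs hμs c)] with x h1 h2 h3
  rw [h2, h3, Pi.smul_apply, h1]
  by_cases hx : x ∈ s <;> simp [hx]

lemma dom_of_ind (hR : R ≠ ∞) (θ : Lp ℝ R ν →L[ℝ] ℝ)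
    (h : ∀ (E : Set X) (hE : MeasurableSet E) (hμ : ν E ≠ ∞), 0 ≤ θ (indicatorConstLp R hE hμ 1)) :
    ∀ g : Lp ℝ R ν, 0 ≤ g → 0 ≤ θ g := by
  have key : ∀ g : Lp ℝ R ν, 0 ≤ θ (g ⊔ 0) := by
    intro g
    induction g using Lp.induction hR with
    | @indicatorConst c s hs hμs =>
      rw [Lp.simpleFunc.coe_indicatorConst]
      rcases le_total 0 c with hc | hc
      · rw [sup_of_le_left (indLp_nonneg _ _ hc)]
        have : indicatorConstLp R hs hμs.ne c = c • indicatorConstLp R hs hμs.ne (1 : ℝ) := by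
          rw [ind_smul]; simp
        rw [this, map_smul]
        exact mul_nonneg hc (h _ _ _)
      · rw [sup_of_le_right]
        · simp
        · have := indLp_nonneg (R := R) hs hμs.ne (c := -c) (by linarith)
          have h2 : indicatorConstLp R hs hμs.ne (-c) = - indicatorConstLp R hs hμs.ne c := by
            have := ind_smul (R := R) hs hμs.ne (-1 : ℝ) c
            simpa using this.symm
          rw [h2] at this
          exact neg_nonneg.1 this
    | @add f g hf hg hd h1 h2 =>
      have : (hf.toLp f + hg.toLp g) ⊔ 0 = (hf.toLp f ⊔ 0) + (hg.toLp g ⊔ 0) := by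
        ext1
        filter_upwards [Lp.coeFn_sup (hf.toLp f + hg.toLp g) 0, Lp.coeFn_add (hf.toLp f) (hg.toLp g),
          Lp.coeFn_sup (hf.toLp f) 0, Lp.coeFn_sup (hg.toLp g) 0,
          Lp.coeFn_add (hf.toLp f ⊔ 0) (hg.toLp g ⊔ 0), Lp.coeFn_zero ℝ R ν, hf.coeFn_toLp, hg.coeFn_toLp]
          with x a1 a2 a3 a4 a5 a6 a7 a8
        rw [a1, a5, Pi.sup_apply, Pi.add_apply, a3, a4, a2, Pi.sup_apply, Pi.sup_apply, Pi.add_apply, a6,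
          a7, a8]
        by_cases hx : f x = 0
        · simp [hx]
        · have : g x = 0 := by
            by_contra hgx
            exact Set.disjoint_left.1 hd hx hgx
          simp [this]
      rw [this, map_add]
      exact add_nonneg h1 h2
    | isClosed =>
      exact isClosed_Ici.preimage (θ.continuous.comp (continuous_id.sup continuous_const))
  intro g hg
  have := key g
  rwa [sup_of_le_left hg] at this

lemma exists_minorant (hR : R ≠ ∞) (ψ : Lp ℝ R ν →L[ℝ] ℝ) (hψ : ∀ g : Lp ℝ R ν, 0 ≤ g → 0 ≤ ψ g)
    {A : Set X} (hA : MeasurableSet A) (hμA : ν A ≠ ∞) (hpos : 0 < ψ (indicatorConstLp R hA hμA 1)) :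
    ∃ k : Lp ℝ P ν, 0 ≤ k ∧ k ≠ 0 ∧ ∀ g : Lp ℝ R ν, 0 ≤ g → prB ν P R k g ≤ ψ g := by
  obtain ⟨m, hm⟩ := exists_measure hR ψ hψ hA hμA
  have : IsFiniteMeasure m := ⟨by rw [hm _ MeasurableSet.univ]; exact ENNReal.ofReal_lt_top⟩
  have : IsFiniteMeasure (ν.restrict A) := ⟨by simpa using hμA.lt_top⟩
  have hac : m ≪ ν.restrict A := by
    refine Measure.AbsolutelyContinuous.mk (fun s hs h0 => ?_)
    rw [Measure.restrict_apply hs] at h0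
    rw [hm s hs]
    have : indicatorConstLp R (hs.inter hA)
        (measure_ne_top_of_subset Set.inter_subset_right hμA) (1 : ℝ) = 0 := by
      ext1
      have h1 : ∀ᵐ x ∂ν, x ∉ s ∩ A := measure_eq_zero_iff_ae_notMem.1 h0
      filter_upwards [indicatorConstLp_coeFn_notMem (p := R) (hs := hs.inter hA)
        (hμs := measure_ne_top_of_subset Set.inter_subset_right hμA) (c := (1 : ℝ)), h1,
        Lp.coeFn_zero ℝ R ν] with x a b c
      rw [a b, c]; rfl
    rw [this]; simp
  have hd := Measure.withDensity_rnDeriv_eq m (ν.restrict A) hac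
  set d := m.rnDeriv (ν.restrict A)
  have hdm : Measurable d := Measure.measurable_rnDeriv _ _
  have hkm : Measurable (fun x => (min (d x) 1).toReal) := (hdm.min measurable_const).ennreal_toReal
  have hk : MemLp (A.indicator (fun x => (min (d x) 1).toReal)) P ν := by
    rw [memLp_indicator_iff_restrict hA]
    refine MemLp.of_bound hkm.aestronglyMeasurable 1 (ae_of_all _ fun x => ?_)
    rw [Real.norm_of_nonneg ENNReal.toReal_nonneg]
    exact ENNReal.toReal_le_of_le_ofReal zero_le_one (by simp)
  have hk' := hk.coeFn_toLp
  refine ⟨hk.toLp _, ?_, ?_, ?_⟩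
  · rw [← Lp.coeFn_nonneg]
    filter_upwards [hk'] with x hx
    rw [hx]
    exact Set.indicator_nonneg (fun _ _ => ENNReal.toReal_nonneg) x
  · intro h0
    rw [h0] at hk'
    have h1 : ∀ᵐ x ∂(ν.restrict A), d x = 0 := by
      rw [ae_restrict_iff' hA]
      filter_upwards [hk', Lp.coeFn_zero ℝ P ν] with x h1 h2 hxA
      rw [h2, Set.indicator_of_mem hxA, Pi.zero_apply, eq_comm, ENNReal.toReal_eq_zero_iff] at h1
      rcases h1 with h1 | h1
      · simpa using h1
      · simp at h1
    have h2 : m A = 0 := by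
      rw [← hd, withDensity_apply _ hA, lintegral_eq_zero_iff hdm]
      exact ae_restrict_of_ae h1
    rw [hm A hA, ENNReal.ofReal_eq_zero, ind_congr _ _ hA hμA (Set.inter_self A)] at h2
    linarith
  · have := dom_of_ind hR (ψ - prB ν P R (hk.toLp _)) ?_
    · intro g hg
      have := this g hg
      simpa using this
    intro E hE hμ
    have hfin : ν (E ∩ A) ≠ ∞ := measure_ne_top_of_subset Set.inter_subset_right hμA
    have h1 : ψ (indicatorConstLp R (hE.inter hA) hfin 1) ≤ ψ (indicatorConstLp R hE hμ 1) := by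
      have := hψ _ (sub_nonneg.2 (ind_mono (R := R) (hE.inter hA) hfin hE hμ Set.inter_subset_left))
      rw [map_sub] at this
      linarith
    have h2 : ψ (indicatorConstLp R (hE.inter hA) hfin 1) = (m E).toReal := by
      rw [hm E hE, ENNReal.toReal_ofReal (hψ _ (indLp_nonneg _ _ zero_le_one))]
    have h3 : prB ν P R (hk.toLp _) (indicatorConstLp R hE hμ 1) ≤ (m E).toReal := by
      rw [prB_indicator, one_mul, integral_congr_ae (ae_restrict_of_ae hk'), integral_indicator hA,
        Measure.restrict_restrict hA, Set.inter_comm, ← Measure.restrict_restrict hE, integral_toReal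
          (hdm.min measurable_const).aemeasurable
          (ae_of_all _ fun x => (min_le_right _ _).trans_lt ENNReal.one_lt_top)]
      refine ENNReal.toReal_mono (measure_ne_top _ _) ?_
      rw [← hd, withDensity_apply _ hE]
      exact lintegral_mono (fun x => min_le_left _ _)
    simp only [sub_apply]
    linarith

lemma sup_dom (φ : Lp ℝ R ν →L[ℝ] ℝ) {h h' : Lp ℝ P ν}
    (hd : ∀ g : Lp ℝ R ν, 0 ≤ g → prB ν P R h g ≤ φ g)
    (hd' : ∀ g : Lp ℝ R ν, 0 ≤ g → prB ν P R h' g ≤ φ g) (g : Lp ℝ R ν) (hg : 0 ≤ g) :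
    prB ν P R (h ⊔ h') g ≤ φ g := by
  have hD : MeasurableSet {x | (h' : X → ℝ) x ≤ (h : X → ℝ) x} :=
    measurableSet_le (Lp.stronglyMeasurable h').measurable (Lp.stronglyMeasurable h).measurable
  set D := {x | (h' : X → ℝ) x ≤ (h : X → ℝ) x} with hDdef
  have m1 : MemLp (D.indicator g) R ν := (Lp.memLp g).indicator hD
  have m2 : MemLp (Dᶜ.indicator g) R ν := (Lp.memLp g).indicator hD.compl
  have g1 : 0 ≤ m1.toLp _ := by
    rw [← Lp.coeFn_nonneg]
    filter_upwards [m1.coeFn_toLp, (Lp.coeFn_nonneg g).2 hg] with x hx h0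
    rw [hx]
    exact Set.indicator_apply_nonneg (fun _ => h0)
  have g2 : 0 ≤ m2.toLp _ := by
    rw [← Lp.coeFn_nonneg]
    filter_upwards [m2.coeFn_toLp, (Lp.coeFn_nonneg g).2 hg] with x hx h0
    rw [hx]
    exact Set.indicator_apply_nonneg (fun _ => h0)
  have e : m1.toLp _ + m2.toLp _ = g := by
    ext1
    filter_upwards [m1.coeFn_toLp, m2.coeFn_toLp, Lp.coeFn_add (m1.toLp _) (m2.toLp _)] with x a b c
    rw [c, Pi.add_apply, a, b]
    by_cases hx : x ∈ D <;> simp [hx]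
  have e2 : prB ν P R (h ⊔ h') g = prB ν P R h (m1.toLp _) + prB ν P R h' (m2.toLp _) := by
    rw [prB_apply, prB_apply, prB_apply, ← integral_add (pr_integrable _ _) (pr_integrable _ _)]
    apply integral_congr_ae
    filter_upwards [m1.coeFn_toLp, m2.coeFn_toLp, Lp.coeFn_sup h h'] with x a b c
    rw [a, b, c]
    by_cases hx : x ∈ D
    · have hx' : (h' : X → ℝ) x ≤ (h : X → ℝ) x := hx
      simp [hx, hx']
    · have hx' : (h : X → ℝ) x ≤ (h' : X → ℝ) x := (not_le.1 hx).le
      simp [hx, hx']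
  have e3 : φ g = φ (m1.toLp _) + φ (m2.toLp _) := by rw [← map_add, e]
  rw [e2, e3]
  exact add_le_add (hd _ g1) (hd' _ g2)

lemma riesz_pos (hP : P ≠ ∞) (hR : R ≠ ∞) (φ : Lp ℝ R ν →L[ℝ] ℝ)
    (hφ : ∀ g : Lp ℝ R ν, 0 ≤ g → 0 ≤ φ g) :
    ∃ h : Lp ℝ P ν, ∀ g, prB ν P R h g = φ g := by
  have hc : P.toReal.HolderConjugate R.toReal := ENNReal.HolderConjugate.toReal_of_ne_top hP hR
  have hq := hc.pos
  set q := P.toReal with hqdef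
  let H : Set (Lp ℝ P ν) := {h | 0 ≤ h ∧ ∀ g : Lp ℝ R ν, 0 ≤ g → prB ν P R h g ≤ φ g}
  have hH0 : (0 : Lp ℝ P ν) ∈ H := ⟨le_rfl, fun g hg => by simpa using hφ g hg⟩
  have hHs : ∀ h ∈ H, ∀ h' ∈ H, h ⊔ h' ∈ H := fun h a h' b =>
    ⟨a.1.trans le_sup_left, sup_dom φ a.2 b.2⟩
  have hHc : IsClosed H := by
    have : H = Set.Ici 0 ∩ ⋂ g : Lp ℝ R ν, ⋂ _ : 0 ≤ g, {h | prB ν P R h g ≤ φ g} := by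
      ext h; simp [H]
    rw [this]
    refine isClosed_Ici.inter (isClosed_iInter fun g => isClosed_iInter fun _ => ?_)
    exact isClosed_le ((prB ν P R).flip g).continuous continuous_const
  have hbd : BddAbove ((fun h : Lp ℝ P ν => ‖h‖ ^ q) '' H) := by
    refine ⟨‖φ‖ ^ q, ?_⟩
    rintro _ ⟨h, hh, rfl⟩
    exact Real.rpow_le_rpow (norm_nonneg _) (norm_le_of_dom hP hR φ hh.1 hh.2) hq.le
  set s := sSup ((fun h : Lp ℝ P ν => ‖h‖ ^ q) '' H) with hs
  have hle : ∀ h ∈ H, ‖h‖ ^ q ≤ s := fun h hh => le_csSup hbd ⟨h, hh, rfl⟩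
  have hex : ∀ n : ℕ, ∃ h ∈ H, s - 1 / ((n : ℝ) + 1) < ‖h‖ ^ q := by
    intro n
    obtain ⟨_, ⟨h, hh, rfl⟩, h2⟩ := exists_lt_of_lt_csSup (Set.Nonempty.image _ ⟨0, hH0⟩)
      (show s - 1 / ((n : ℝ) + 1) < s by
        have : 0 < 1 / ((n : ℝ) + 1) := by positivity
        linarith)
    exact ⟨h, hh, h2⟩
  choose v hvH hv using hex
  let u := partialSups v
  have huH : ∀ n, u n ∈ H := by
    intro n
    induction n with
    | zero => simpa [u] using hvH 0
    | succ n ih =>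
      have : u (n + 1) = u n ⊔ v (n + 1) := by
        exact partialSups_succ v n
      rw [this]
      exact hHs _ ih _ (hvH _)
  have hmonoN : ∀ a b : Lp ℝ P ν, 0 ≤ a → a ≤ b → ‖a‖ ^ q ≤ ‖b‖ ^ q := by
    intro a b ha hab
    refine Real.rpow_le_rpow (norm_nonneg _) (norm_le_norm_of_abs_le_abs ?_) hq.le
    rwa [abs_of_nonneg ha, abs_of_nonneg (ha.trans hab)]
  have huN : ∀ n : ℕ, s - 1 / ((n : ℝ) + 1) < ‖u n‖ ^ q := fun n =>
    (hv n).trans_le (hmonoN _ _ (hvH n).1 (le_partialSups v n))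
  have hcau : CauchySeq u := by
    refine cauchySeq_of_le_tendsto_0' (fun n : ℕ => (1 / ((n : ℝ) + 1)) ^ (1 / q)) ?_ ?_
    · intro n m hnm
      have h1 : u n ≤ u m := u.monotone hnm
      have h2 := superadd hP (huH n).1 (sub_nonneg.2 h1)
      rw [add_sub_cancel] at h2
      have h3 := hle _ (huH m)
      have h4 := huN n
      rw [dist_comm, dist_eq_norm]
      have h5 : ‖u m - u n‖ ^ q ≤ 1 / ((n : ℝ) + 1) := by linarith
      rw [one_div q]
      exact (Real.le_rpow_inv_iff_of_pos (norm_nonneg _) (by positivity) hq).2 h5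
    · have := (tendsto_one_div_add_atTop_nhds_zero_nat (𝕜 := ℝ)).rpow_const (p := 1 / q)
        (Or.inr (by positivity))
      rwa [Real.zero_rpow (by positivity)] at this
  obtain ⟨h, hlim⟩ := cauchySeq_tendsto_of_complete hcau
  have hh : h ∈ H := hHc.mem_of_tendsto hlim (Eventually.of_forall huH)
  have hge : s ≤ ‖h‖ ^ q := by
    have : Tendsto (fun n : ℕ => s - 1 / ((n : ℝ) + 1)) atTop (𝓝 (s - 0)) :=
      tendsto_const_nhds.sub (tendsto_one_div_add_atTop_nhds_zero_nat (𝕜 := ℝ))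
    rw [sub_zero] at this
    refine le_of_tendsto this (Eventually.of_forall fun n => (huN n).le.trans ?_)
    exact hmonoN _ _ (huH n).1 (u.monotone.ge_of_tendsto hlim n)
  refine ⟨h, ?_⟩
  set ψ := φ - prB ν P R h with hψdef
  have hψ : ∀ g : Lp ℝ R ν, 0 ≤ g → 0 ≤ ψ g := fun g hg => by
    have := hh.2 g hg
    simpa [hψdef] using this
  have hψ' : ∀ g : Lp ℝ R ν, 0 ≤ g → 0 ≤ (-ψ) g := by
    apply dom_of_ind hR
    intro A hA hμA
    by_contra hcon
    have hpos : 0 < ψ (indicatorConstLp R hA hμA 1) := by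
      simpa using hcon
    obtain ⟨k, k0, k1, k2⟩ := exists_minorant (P := P) hR ψ hψ hA hμA hpos
    have hk : h + k ∈ H := by
      refine ⟨add_nonneg hh.1 k0, fun g hg => ?_⟩
      have := k2 g hg
      simp only [hψdef, sub_apply] at this
      rw [map_add, add_apply]
      linarith
    have h1 := hle _ hk
    have h2 := superadd hP hh.1 k0
    have h3 : 0 < ‖k‖ ^ q := Real.rpow_pos_of_pos (norm_pos_iff.2 k1) _
    linarith
  have hz : ∀ g : Lp ℝ R ν, 0 ≤ g → ψ g = 0 := fun g hg =>
    le_antisymm (by simpa using hψ' g hg) (hψ g hg)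
  intro g
  have : ψ g = 0 := by
    rw [← posPart_sub_negPart g, map_sub, hz _ (posPart_nonneg g), hz _ (negPart_nonneg g), sub_zero]
  simp only [hψdef, sub_apply] at this
  linarith

lemma lq_le_lp {n : ℕ} {p q : ℝ} (hp : 1 ≤ p) (hpq : p ≤ q) (y : Fin n → ℝ) :
    (∑ k, |y k| ^ q) ^ (1 / q) ≤ (∑ k, |y k| ^ p) ^ (1 / p) := by
  have hp0 : 0 < p := by linarith
  have hq0 : 0 < q := by linarith
  have hS0 : 0 ≤ ∑ k, |y k| ^ p := Finset.sum_nonneg fun k _ => by positivity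
  set S := (∑ k, |y k| ^ p) ^ (1 / p) with hS
  have hSn : 0 ≤ S := by positivity
  have hSp : ∑ k, |y k| ^ p = S ^ p := by
    rw [hS, ← Real.rpow_mul hS0, one_div_mul_cancel hp0.ne', Real.rpow_one]
  have hk : ∀ k, |y k| ≤ S := by
    intro k
    rw [← Real.rpow_le_rpow_iff (abs_nonneg _) hSn hp0, ← hSp]
    exact Finset.single_le_sum (f := fun k => |y k| ^ p) (fun k _ => by positivity) (Finset.mem_univ k)
  have hsplit : ∀ x : ℝ, 0 ≤ x → x ^ q = x ^ p * x ^ (q - p) := by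
    intro x hx
    rw [← Real.rpow_add_of_nonneg hx hp0.le (by linarith)]; congr 1; ring
  rw [one_div, Real.rpow_inv_le_iff_of_pos (Finset.sum_nonneg fun k _ => by positivity) hSn hq0,
    hsplit S hSn, ← hSp, Finset.sum_mul]
  refine Finset.sum_le_sum fun k _ => ?_
  rw [hsplit _ (abs_nonneg _)]
  exact mul_le_mul_of_nonneg_left (Real.rpow_le_rpow (abs_nonneg _) (hk k) (by linarith)) (by positivity)

lemma dual_real {n : ℕ} {q q' : ℝ} (hc : q.HolderConjugate q') (y : Fin n → ℝ) {c : ℝ} (hc0 : 0 ≤ c)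
    (h : ∀ a : Fin n → ℝ, ∑ k, a k * y k ≤ (∑ k, |a k| ^ q') ^ (1 / q') * c) :
    ∑ k, |y k| ^ q ≤ c ^ q := by
  have hS0 : 0 ≤ ∑ k, |y k| ^ q := Finset.sum_nonneg fun k _ => by positivity
  have h1 := h (fun k => SignType.sign (y k) * |y k| ^ (q - 1))
  have e1 : ∀ k, (SignType.sign (y k) * |y k| ^ (q - 1)) * y k = |y k| ^ q := by
    intro k
    rw [mul_right_comm, sign_mul_self]
    rcases (abs_nonneg (y k)).eq_or_lt with h0 | h0
    · rw [← h0, Real.zero_rpow hc.ne_zero]; simp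
    · nth_rw 1 [← Real.rpow_one |y k|]
      rw [← Real.rpow_add h0]; simp
  have e2 : ∀ k, |SignType.sign (y k) * |y k| ^ (q - 1)| ^ q' = |y k| ^ q := by
    intro k
    rcases (abs_nonneg (y k)).eq_or_lt with h0 | h0
    · have : y k = 0 := abs_eq_zero.1 h0.symm
      simp [this, Real.zero_rpow hc.ne_zero, Real.zero_rpow hc.symm.ne_zero]
    · rw [abs_mul, abs_of_nonneg (a := |y k| ^ (q - 1)) (by positivity)]
      have : |((SignType.sign (y k) : SignType) : ℝ)| = 1 := by
        rcases lt_or_gt_of_ne (abs_pos.1 h0) with h | h <;> simp [h]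
      rw [this, one_mul, ← Real.rpow_mul (abs_nonneg _), hc.sub_one_mul_conj]
  simp only [e1, e2] at h1
  rcases hS0.eq_or_lt with h0 | h0
  · rw [← h0]; positivity
  set S := ∑ k, |y k| ^ q
  have e3 : S = S ^ (1 / q') * S ^ (1 / q) := by
    rw [← Real.rpow_add h0, one_div, one_div, add_comm, hc.inv_add_inv_eq_one, Real.rpow_one]
  nth_rw 1 [e3] at h1
  have h2 := le_of_mul_le_mul_left h1 (by positivity)
  rwa [one_div, Real.rpow_inv_le_iff_of_pos hS0 hc0 hc.pos] at h2

lemma summing_of_pos {K : Type*} [TopologicalSpace K] [CompactSpace K] (p q q' : ℝ)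
    (hp : 1 ≤ p) (hpq : p ≤ q) (hc : q.HolderConjugate q')
    [Fact (1 ≤ ENNReal.ofReal q)] (T : C(K, ℝ) →L[ℝ] Lp ℝ (ENNReal.ofReal q) ν)
    (hT : ∀ f : C(K, ℝ), 0 ≤ f → 0 ≤ T f) : IsSummingQPReal q p T := by
  have hp0 : 0 < p := by linarith
  have hq0 : 0 < q := by linarith
  refine ⟨‖T 1‖, norm_nonneg _, fun n x => ?_⟩
  have hbdd : BddAbove (Set.range fun φ : {φ : StrongDual ℝ C(K, ℝ) // ‖φ‖ ≤ 1} =>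
      (∑ k, ‖(φ : StrongDual ℝ C(K, ℝ)) (x k)‖ ^ p) ^ (1 / p)) := by
    refine ⟨(∑ k, ‖x k‖ ^ p) ^ (1 / p), ?_⟩
    rintro _ ⟨φ, rfl⟩
    refine Real.rpow_le_rpow (Finset.sum_nonneg fun k _ => by positivity)
      (Finset.sum_le_sum fun k _ => Real.rpow_le_rpow (norm_nonneg _) ?_ hp0.le) (by positivity)
    exact φ.1.le_of_opNorm_le φ.2 (x k) |>.trans (by simp)
  set M := ⨆ φ : {φ : StrongDual ℝ C(K, ℝ) // ‖φ‖ ≤ 1},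
      (∑ k, ‖(φ : StrongDual ℝ C(K, ℝ)) (x k)‖ ^ p) ^ (1 / p) with hM
  have hM0 : 0 ≤ M := Real.iSup_nonneg fun φ => by positivity
  have hMt : ∀ t : K, (∑ k, |x k t| ^ p) ^ (1 / p) ≤ M := by
    intro t
    have hn : ‖(ContinuousMap.evalCLM ℝ t : C(K, ℝ) →L[ℝ] ℝ)‖ ≤ 1 :=
      ContinuousLinearMap.opNorm_le_bound _ zero_le_one (fun f => by
        simpa using f.norm_coe_le_norm t)
    exact le_ciSup hbdd ⟨ContinuousMap.evalCLM ℝ t, hn⟩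
  have hdom : ∀ a : Fin n → ℝ, ∑ k, a k • T (x k) ≤ ((∑ k, |a k| ^ q') ^ (1 / q') * M) • T 1 := by
    intro a
    have h0 : 0 ≤ ((∑ k, |a k| ^ q') ^ (1 / q') * M) • (1 : C(K, ℝ)) - ∑ k, a k • x k := by
      rw [ContinuousMap.le_def]
      intro t
      simp only [ContinuousMap.coe_zero, Pi.zero_apply, ContinuousMap.sub_apply,
        ContinuousMap.smul_apply, ContinuousMap.one_apply, ContinuousMap.sum_apply, smul_eq_mul, mul_one,
        sub_nonneg]
      refine (Real.inner_le_Lp_mul_Lq _ _ _ hc.symm).trans ?_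
      refine mul_le_mul_of_nonneg_left ((lq_le_lp hp hpq _).trans (hMt t)) (by positivity)
    have := hT _ h0
    rw [map_sub, map_smul, map_sum, sub_nonneg] at this
    simpa using this
  have hae : ∀ᵐ w ∂ν, ∀ a : Fin n → ℚ, ∑ k, (a k : ℝ) * (T (x k) : X → ℝ) w ≤
      (∑ k, |(a k : ℝ)| ^ q') ^ (1 / q') * (M * (T 1 : X → ℝ) w) := by
    rw [ae_all_iff]
    intro a
    have h1 := hdom (fun k => (a k : ℝ))
    rw [← Lp.coeFn_le] at h1
    have h2 : ∀ᵐ w ∂ν, ∀ k, (((a k : ℝ) • T (x k) : Lp ℝ (ENNReal.ofReal q) ν) : X → ℝ) w =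
        (a k : ℝ) * (T (x k) : X → ℝ) w := by
      rw [ae_all_iff]
      intro k
      filter_upwards [Lp.coeFn_smul (a k : ℝ) (T (x k))] with w hw
      rw [hw]; rfl
    filter_upwards [h1, h2, Lp.coeFn_smul ((∑ k, |(a k : ℝ)| ^ q') ^ (1 / q') * M) (T 1),
      Lp.coeFn_finsetSum Finset.univ (fun k => (a k : ℝ) • T (x k))] with w w1 w2 w3 w4
    rw [w3, w4] at w1
    simp only [Finset.sum_apply, w2, Pi.smul_apply, smul_eq_mul] at w1
    linarith
  have hpt : ∀ᵐ w ∂ν, ∑ k, |(T (x k) : X → ℝ) w| ^ q ≤ M ^ q * |(T 1 : X → ℝ) w| ^ q := by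
    filter_upwards [hae, (Lp.coeFn_nonneg _).2 (hT 1 zero_le_one)] with w hw h1
    rw [abs_of_nonneg h1, ← Real.mul_rpow hM0 h1]
    refine dual_real hc _ (mul_nonneg hM0 h1) ?_
    have hdr : DenseRange (fun (a : Fin n → ℚ) (k : Fin n) => (a k : ℝ)) :=
      DenseRange.piMap (fun _ => Rat.denseRange_cast)
    intro a
    refine hdr.induction_on (p := fun a : Fin n → ℝ => ∑ k, a k * (T (x k) : X → ℝ) w ≤
      (∑ k, |a k| ^ q') ^ (1 / q') * (M * (T 1 : X → ℝ) w)) a ?_ hw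
    refine isClosed_le (by fun_prop) ?_
    have hq' := hc.symm.pos
    refine Continuous.mul ?_ continuous_const
    refine Continuous.rpow_const ?_ (fun _ => Or.inr (by positivity))
    refine continuous_finsetSum _ fun k _ => ?_
    exact Continuous.rpow_const (by fun_prop) (fun _ => Or.inr hq'.le)
  have hPq : (ENNReal.ofReal q).toReal = q := ENNReal.toReal_ofReal hq0.le
  have hN : ∀ h : Lp ℝ (ENNReal.ofReal q) ν, ‖h‖ ^ q = ∫ w, |(h : X → ℝ) w| ^ q ∂ν := by
    intro h
    have := norm_rpow_eq ENNReal.ofReal_ne_top h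
    rwa [hPq] at this
  have hI : ∀ h : Lp ℝ (ENNReal.ofReal q) ν, Integrable (fun w => |(h : X → ℝ) w| ^ q) ν := by
    intro h
    have := rpow_integrable ENNReal.ofReal_ne_top h
    rwa [hPq] at this
  have hfin : ∑ k, ‖T (x k)‖ ^ q ≤ (‖T 1‖ * M) ^ q := by
    simp only [hN]
    rw [← integral_finsetSum _ (fun k _ => hI _), mul_comm, Real.mul_rpow hM0 (norm_nonneg _), hN,
      ← integral_const_mul]
    exact integral_mono_ae (integrable_finsetSum _ fun k _ => hI _) ((hI _).const_mul _) hpt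
  rw [one_div, Real.rpow_inv_le_iff_of_pos (Finset.sum_nonneg fun k _ => by positivity)
    (by positivity) hq0]
  exact hfin

lemma pettis_continuous {Ω : Type*} [MeasurableSpace Ω] (μ : Measure Ω) (A : Ω → Lp ℝ P ν)
    (hA : ∀ g : Lp ℝ R ν, Integrable (fun t => prB ν P R (A t) g) μ) :
    ∃ φ : Lp ℝ R ν →L[ℝ] ℝ, ∀ g, φ g = ∫ t, prB ν P R (A t) g ∂μ := by
  let L : Lp ℝ R ν →ₗ[ℝ] (Ω →₁[μ] ℝ) :=
    { toFun := fun g => (hA g).toL1 _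
      map_add' := by
        intro g g'
        rw [← Integrable.toL1_add, Integrable.toL1_eq_toL1_iff]
        exact ae_of_all _ fun t => by simp
      map_smul' := by
        intro c g
        rw [RingHom.id_apply, ← Integrable.toL1_smul, Integrable.toL1_eq_toL1_iff]
        exact ae_of_all _ fun t => by simp }
  have hL : Continuous L := by
    refine L.continuous_of_seq_closed_graph fun u g y hu hy => ?_
    obtain ⟨ns, hns, hae⟩ := (tendstoInMeasure_of_tendsto_Lp hy).exists_seq_tendsto_ae
    have h1 : ∀ᵐ t ∂μ, ∀ n, (L (u n) : Ω → ℝ) t = prB ν P R (A t) (u n) := by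
      rw [ae_all_iff]
      exact fun n => (hA (u n)).coeFn_toL1
    ext1
    filter_upwards [hae, h1, (hA g).coeFn_toL1] with t t1 t2 t3
    refine Eq.trans ?_ t3.symm
    refine tendsto_nhds_unique t1 ?_
    simp only [Function.comp_apply, t2]
    exact (((prB ν P R (A t)).continuous.tendsto g).comp hu).comp hns.tendsto_atTop
  refine ⟨(L1.integralCLM).comp ⟨L, hL⟩, fun g => ?_⟩
  have : (L1.integralCLM : (Ω →₁[μ] ℝ) →L[ℝ] ℝ) (L g) = ∫ t, (L g : Ω → ℝ) t ∂μ := by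
    rw [← L1.integral_eq_integral, L1.integral_eq]
  refine Eq.trans this (integral_congr_ae (hA g).coeFn_toL1)

lemma main_aux {K : Type*} [TopologicalSpace K] [CompactSpace K] (hP : P ≠ ∞) (hR : R ≠ ∞)
    {Ω : Type*} [MeasurableSpace Ω] (μ : Measure Ω) (A : Ω → (C(K, ℝ) →L[ℝ] Lp ℝ P ν))
    (hA : ∀ (f : C(K, ℝ)) (g : Lp ℝ R ν), Integrable (fun t => prB ν P R (A t f) g) μ)
    (hpos : ∀ t f, 0 ≤ f → 0 ≤ A t f) :
    ∃ I : C(K, ℝ) →L[ℝ] Lp ℝ P ν, ∀ f (g : Lp ℝ R ν),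
      prB ν P R (I f) g = ∫ t, prB ν P R (A t f) g ∂μ := by
  have h1 : ∀ f : C(K, ℝ), 0 ≤ f → ∃ h : Lp ℝ P ν, ∀ g : Lp ℝ R ν,
      prB ν P R h g = ∫ t, prB ν P R (A t f) g ∂μ := by
    intro f hf
    obtain ⟨φ, hφ⟩ := pettis_continuous μ (fun t => A t f) (hA f)
    obtain ⟨h, hh⟩ := riesz_pos hP hR φ (fun g hg => by
      rw [hφ]
      exact integral_nonneg fun t => prB_nonneg (hpos t f hf) hg)
    exact ⟨h, fun g => by rw [hh, hφ]⟩
  have h2 : ∀ f : C(K, ℝ), ∃ h : Lp ℝ P ν, ∀ g : Lp ℝ R ν,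
      prB ν P R h g = ∫ t, prB ν P R (A t f) g ∂μ := by
    intro f
    obtain ⟨a, ha⟩ := h1 f⁺ (posPart_nonneg f)
    obtain ⟨b, hb⟩ := h1 f⁻ (negPart_nonneg f)
    refine ⟨a - b, fun g => ?_⟩
    rw [map_sub, sub_apply, ha, hb, ← integral_sub (hA _ _) (hA _ _)]
    congr 1
    ext t
    conv_rhs => rw [← posPart_sub_negPart f]
    simp only [map_sub, sub_apply]
  choose I hI using h2
  let I' : C(K, ℝ) →ₗ[ℝ] Lp ℝ P ν :=
    { toFun := I
      map_add' := fun f f' => by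
        refine eq_of_prB (R := R) hP _ _ fun g => ?_
        simp only [map_add, add_apply, hI]
        rw [← integral_add (hA _ _) (hA _ _)]
      map_smul' := fun c f => by
        refine eq_of_prB (R := R) hP _ _ fun g => ?_
        simp only [map_smul, smul_apply, hI, RingHom.id_apply]
        rw [integral_smul] }
  have hI' : ∀ f, 0 ≤ f → 0 ≤ I' f := fun f hf => nonneg_of_prB (R := R) hP _ fun g hg => by
    change 0 ≤ prB ν P R (I f) g
    rw [hI]
    exact integral_nonneg fun t => prB_nonneg (hpos t f hf) hg
  refine ⟨I'.mkContinuous ‖I' 1‖ fun f => ?_, hI⟩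
  have e1 : 0 ≤ I' (‖f‖ • (1 : C(K, ℝ)) - f) := hI' _ (by
    rw [ContinuousMap.le_def]
    intro t
    have := (abs_le.1 (f.norm_coe_le_norm t)).2
    simpa using this)
  have e2 : 0 ≤ I' (‖f‖ • (1 : C(K, ℝ)) + f) := hI' _ (by
    rw [ContinuousMap.le_def]
    intro t
    have := (abs_le.1 (f.norm_coe_le_norm t)).1
    simp
    linarith)
  have e3 : |I' f| ≤ |‖f‖ • I' 1| := by
    refine le_trans ?_ (le_abs_self _)
    rw [map_sub, map_smul, sub_nonneg] at e1
    rw [map_add, map_smul] at e2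
    rw [add_comm, ← neg_le_iff_add_nonneg] at e2
    exact abs_le'.2 ⟨e1, neg_le.1 e2⟩
  refine (norm_le_norm_of_abs_le_abs e3).trans ?_
  rw [norm_smul, norm_norm, mul_comm]

end aux

/-- if `𝒜 : Ω → B(C(K,ℝ), L^q(X,ν))` is weakly* integrable (against
all `g ∈ L^{q'}`) and each `𝒜_t` is a positive operator, then for every measurable
`S` the Gel'fand integral `∫_S 𝒜 dμ` exists (as the unique bounded operator with the
defining pairing property) and is `(q,p)`-summing. -/
theorem stmt15 (K : Type*) [TopologicalSpace K] [CompactSpace K] [T2Space K]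
    (X : Type*) [MeasurableSpace X] (ν : Measure X)
    (p q q' : ℝ) (hp : 1 ≤ p) (hpq : p ≤ q) (hq : 1 < q) (hq' : 1 / q + 1 / q' = 1)
    [Fact (1 ≤ ENNReal.ofReal q)] [Fact (1 ≤ ENNReal.ofReal q')]
    {Ω : Type*} [MeasurableSpace Ω] (μ : Measure Ω)
    (𝒜 : Ω → (C(K, ℝ) →L[ℝ] Lp ℝ (ENNReal.ofReal q) ν))
    (hint : ∀ (f : C(K, ℝ)) (g : Lp ℝ (ENNReal.ofReal q') ν),
      Integrable (fun t => ∫ x, (𝒜 t f : X → ℝ) x * (g : X → ℝ) x ∂ν) μ)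
    (hpos : ∀ t : Ω, ∀ f : C(K, ℝ), 0 ≤ f → ∀ᵐ x ∂ν, 0 ≤ (𝒜 t f : X → ℝ) x) :
    ∀ S : Set Ω, MeasurableSet S →
      (∃! I : C(K, ℝ) →L[ℝ] Lp ℝ (ENNReal.ofReal q) ν,
        ∀ (f : C(K, ℝ)) (g : Lp ℝ (ENNReal.ofReal q') ν),
          ∫ x, (I f : X → ℝ) x * (g : X → ℝ) x ∂ν =
            ∫ t in S, (∫ x, (𝒜 t f : X → ℝ) x * (g : X → ℝ) x ∂ν) ∂μ) ∧
      ∀ I : C(K, ℝ) →L[ℝ] Lp ℝ (ENNReal.ofReal q) ν,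
        (∀ (f : C(K, ℝ)) (g : Lp ℝ (ENNReal.ofReal q') ν),
          ∫ x, (I f : X → ℝ) x * (g : X → ℝ) x ∂ν =
            ∫ t in S, (∫ x, (𝒜 t f : X → ℝ) x * (g : X → ℝ) x ∂ν) ∂μ) →
        IsSummingQPReal q p I := by
  have hc : q.HolderConjugate q' := by
    rw [Real.holderConjugate_iff]
    exact ⟨hq, by simpa using hq'⟩
  have : ENNReal.HolderConjugate (ENNReal.ofReal q) (ENNReal.ofReal q') := hc.ennrealOfReal
  have hP : ENNReal.ofReal q ≠ ∞ := ENNReal.ofReal_ne_top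
  have hR : ENNReal.ofReal q' ≠ ∞ := ENNReal.ofReal_ne_top
  intro S hS
  simp only [← prB_apply] at hint ⊢
  have hpos' : ∀ t f, 0 ≤ f → 0 ≤ 𝒜 t f := fun t f hf => (Lp.coeFn_nonneg _).1 (hpos t f hf)
  obtain ⟨I, hI⟩ := main_aux hP hR (μ.restrict S) 𝒜 (fun f g => (hint f g).restrict) hpos'
  refine ⟨⟨I, hI, fun J hJ => ?_⟩, fun J hJ => ?_⟩
  · ext1 f
    exact eq_of_prB (R := ENNReal.ofReal q') hP _ _ fun g => by rw [hJ, hI]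
  · refine summing_of_pos p q q' hp hpq hc J fun f hf =>
      nonneg_of_prB (R := ENNReal.ofReal q') hP _ fun g hg => ?_
    rw [hJ]
    exact integral_nonneg fun t => prB_nonneg (hpos' t f hf) hg
end

section
/- Let K be a compact Hausdorff space, (X, ν) a measure space, 1 ≤ p ≤ q < ∞ with 1 < q and q' the conjugate exponent of q, and (Ω, 𝔐, μ) a measure space. Let 𝒜 : Ω → B(C(K,ℝ), L^q(X,ν)) be such that for every f ∈ C(K,ℝ) and every g ∈ L^{q'}(X,ν) the function t ↦ ∫_X (𝒜_t f)·g dν is integrable on Ω, and suppose each 𝒜_t is a positive operator (f ≥ 0 implies 𝒜_t f ≥ 0 ν-a.e.). Then for every weakly p-summable sequence (f_n)_{n=1}^∞ in C(K,ℝ) and every sequence (g_n)_{n=1}^∞ in L^{q'}(X,ν) with ∑_n ‖g_n‖_{q'}^{q'} < ∞, one has ∫_Ω ∑_{n=1}^∞ |∫_X (𝒜_t f_n)·g_n dν| dμ(t) < +∞. -/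
open MeasureTheory ENNReal

lemma weak_unif {E : Type*} [NormedAddCommGroup E] [NormedSpace ℝ E]
    (p q q' : ℝ) (hp : 1 ≤ p) (hpq : p ≤ q) (hqq : q.HolderConjugate q')
    (f : ℕ → E) (hf : ∀ φ : StrongDual ℝ E, Summable fun n => ‖φ (f n)‖ ^ p) :
    ∃ C : ℝ, 0 ≤ C ∧ ∀ (s : Finset ℕ) (c : ℕ → ℝ),
      ‖∑ n ∈ s, c n • f n‖ ≤ C * (∑ n ∈ s, |c n| ^ q') ^ (1 / q') := by
  have hq'0 : 0 < q' := hqq.symm.pos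
  have hfq : ∀ φ : StrongDual ℝ E, Summable fun n => |φ (f n)| ^ q := by
    intro φ
    have h := hf φ
    refine Summable.of_norm_bounded_eventually_nat h ?_
    have h0 := h.tendsto_atTop_zero
    have h1 : ∀ᶠ n in Filter.atTop, ‖φ (f n)‖ ^ p < 1 :=
      h0.eventually (gt_mem_nhds one_pos)
    filter_upwards [h1] with n hn
    have hle : ‖φ (f n)‖ ≤ 1 := by
      by_contra hc
      push Not at hc
      exact absurd (Real.one_le_rpow hc.le (by linarith)) (not_le.2 hn)
    rw [Real.norm_of_nonneg (by positivity), ← Real.norm_eq_abs]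
    rcases (norm_nonneg (φ (f n))).eq_or_lt with h0 | h0
    · rw [← h0, Real.zero_rpow (by linarith), Real.zero_rpow (by linarith)]
    · exact Real.rpow_le_rpow_of_exponent_ge h0 hle hpq
  let ι := {sc : Finset ℕ × (ℕ → ℝ) // ∑ n ∈ sc.1, |sc.2 n| ^ q' ≤ 1}
  obtain ⟨C, hC⟩ := banach_steinhaus (ι := ι)
    (g := fun i => NormedSpace.inclusionInDoubleDual ℝ E (∑ n ∈ i.1.1, i.1.2 n • f n)) (by
      intro φ
      refine ⟨(∑' n, |φ (f n)| ^ q) ^ (1 / q), ?_⟩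
      rintro ⟨⟨s, c⟩, hc⟩
      change ‖φ (∑ n ∈ s, c n • f n)‖ ≤ _
      simp only [map_sum, map_smul, smul_eq_mul]
      have h1 := Real.inner_le_Lp_mul_Lq s (fun n => |φ (f n)|) (fun n => |c n|) hqq
      simp only [abs_abs] at h1
      calc ‖∑ n ∈ s, c n * φ (f n)‖ ≤ ∑ n ∈ s, |φ (f n)| * |c n| := by
            refine (norm_sum_le _ _).trans (le_of_eq ?_)
            refine Finset.sum_congr rfl fun n _ => ?_
            rw [Real.norm_eq_abs, abs_mul, mul_comm]
        _ ≤ _ := h1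
        _ ≤ (∑' n, |φ (f n)| ^ q) ^ (1 / q) * 1 := by
            have hq0 := hqq.pos
            gcongr
            · exact (hfq φ).sum_le_tsum _ (fun _ _ => by positivity)
            · exact Real.rpow_le_one (Finset.sum_nonneg fun _ _ => by positivity) hc (by positivity)
        _ = _ := mul_one _)
  have hC' : ∀ (s : Finset ℕ) (c : ℕ → ℝ), ∑ n ∈ s, |c n| ^ q' ≤ 1 →
      ‖∑ n ∈ s, c n • f n‖ ≤ C := by
    intro s c hc
    have := hC ⟨⟨s, c⟩, hc⟩
    have h2 : ‖NormedSpace.inclusionInDoubleDual ℝ E (∑ n ∈ s, c n • f n)‖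
        = ‖∑ n ∈ s, c n • f n‖ := (NormedSpace.inclusionInDoubleDualLi ℝ).norm_map _
    rw [← h2]; exact this
  have hC0 : 0 ≤ C := by simpa using hC' ∅ 0 (by simp)
  refine ⟨C, hC0, fun s c => ?_⟩
  have hS0 : 0 ≤ ∑ n ∈ s, |c n| ^ q' := Finset.sum_nonneg fun _ _ => by positivity
  set S := ∑ n ∈ s, |c n| ^ q' with hS
  rcases hS0.eq_or_lt with h | h
  · have hz : ∀ n ∈ s, c n = 0 := by
      intro n hn
      have := (Finset.sum_eq_zero_iff_of_nonneg (fun n _ => by positivity)).1 (hS.symm.trans h.symm) n hn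
      rw [Real.rpow_eq_zero (abs_nonneg _) hq'0.ne'] at this
      exact abs_eq_zero.1 this
    rw [Finset.sum_eq_zero (fun n hn => by rw [hz n hn, zero_smul]), norm_zero]
    positivity
  · set T := S ^ (1 / q') with hT
    have hT0 : 0 < T := by positivity
    have hTq : T ^ q' = S := by
      rw [hT, ← Real.rpow_mul hS0, one_div, inv_mul_cancel₀ hq'0.ne', Real.rpow_one]
    have := hC' s (fun n => T⁻¹ * c n) (by
      have : ∀ n ∈ s, |T⁻¹ * c n| ^ q' = S⁻¹ * |c n| ^ q' := by
        intro n _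
        rw [abs_mul, Real.mul_rpow (abs_nonneg _) (abs_nonneg _), abs_of_pos (inv_pos.2 hT0),
          Real.inv_rpow hT0.le, hTq]
      rw [Finset.sum_congr rfl this, ← Finset.mul_sum, ← hS, inv_mul_cancel₀ h.ne'])
    simp only [mul_smul, ← Finset.smul_sum] at this
    rw [norm_smul, Real.norm_of_nonneg (by positivity), inv_mul_le_iff₀ hT0] at this
    linarith

lemma exists_G {X : Type*} [MeasurableSpace X] (ν : Measure X) (q' : ℝ) (hq' : 0 < q')
    [Fact (1 ≤ ENNReal.ofReal q')] (g : ℕ → Lp ℝ (ENNReal.ofReal q') ν)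
    (hg : Summable fun n => ‖g n‖ ^ q') :
    ∃ G : Lp ℝ (ENNReal.ofReal q') ν, ∀ᵐ x ∂ν, ∀ s : Finset ℕ,
      (∑ n ∈ s, |(g n : X → ℝ) x| ^ q') ^ (1 / q') ≤ (G : X → ℝ) x := by
  have hne : ENNReal.ofReal q' ≠ 0 := by simpa using hq'
  let h : X → ℝ≥0∞ := fun x => ∑' n, ‖(g n : X → ℝ) x‖ₑ ^ q'
  have hm : ∀ n, AEMeasurable (fun x => ‖(g n : X → ℝ) x‖ₑ ^ q') ν := fun n =>
    ((Lp.aestronglyMeasurable (g n)).enorm).pow_const _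
  have hmh : AEMeasurable h ν := AEMeasurable.tsum hm
  have hfin : ∫⁻ x, h x ∂ν ≠ ⊤ := by
    have h1 : ∫⁻ x, h x ∂ν = ∑' n, ENNReal.ofReal (‖g n‖ ^ q') := by
      rw [lintegral_tsum hm]
      congr 1; ext1 n
      rw [← ENNReal.ofReal_rpow_of_nonneg (norm_nonneg _) hq'.le, ofReal_norm, Lp.enorm_def,
        eLpNorm_eq_lintegral_rpow_enorm_toReal hne ENNReal.ofReal_ne_top,
        ENNReal.toReal_ofReal hq'.le, ← ENNReal.rpow_mul, one_div, inv_mul_cancel₀ hq'.ne',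
        ENNReal.rpow_one]
    rw [h1]
    exact hg.tsum_ofReal_ne_top
  have hae : ∀ᵐ x ∂ν, h x < ⊤ := ae_lt_top' hmh hfin
  let G0 : X → ℝ := fun x => (h x).toReal ^ (1 / q')
  have hG0m : AEStronglyMeasurable G0 ν :=
    (hmh.ennreal_toReal.pow_const _).aestronglyMeasurable
  have hG0 : MemLp G0 (ENNReal.ofReal q') ν := by
    refine ⟨hG0m, ?_⟩
    rw [eLpNorm_lt_top_iff_lintegral_rpow_enorm_lt_top hne ENNReal.ofReal_ne_top,
      ENNReal.toReal_ofReal hq'.le]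
    refine lt_of_le_of_lt (lintegral_mono fun x => ?_) (lt_top_iff_ne_top.2 hfin)
    have hnn : 0 ≤ G0 x := by positivity
    rw [Real.enorm_of_nonneg hnn, ENNReal.ofReal_rpow_of_nonneg hnn hq'.le,
      ← Real.rpow_mul ENNReal.toReal_nonneg, one_div, inv_mul_cancel₀ hq'.ne', Real.rpow_one]
    exact ENNReal.ofReal_toReal_le
  refine ⟨hG0.toLp G0, ?_⟩
  filter_upwards [hae, hG0.coeFn_toLp] with x hx hx2 s
  rw [hx2]
  refine Real.rpow_le_rpow (Finset.sum_nonneg fun _ _ => by positivity) ?_ (by positivity)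
  rw [← ENNReal.ofReal_le_iff_le_toReal hx.ne,
    ENNReal.ofReal_sum_of_nonneg (fun _ _ => by positivity)]
  refine le_trans (le_of_eq ?_) (ENNReal.sum_le_tsum s)
  refine Finset.sum_congr rfl fun n _ => ?_
  rw [← ENNReal.ofReal_rpow_of_nonneg (abs_nonneg _) hq'.le, Real.enorm_eq_ofReal_abs]

lemma pos_bound {K : Type*} [TopologicalSpace K] [CompactSpace K]
    {X : Type*} [MeasurableSpace X] (ν : Measure X) (r : ℝ≥0∞) [Fact (1 ≤ r)]
    (q' : ℝ) (hq' : 0 < q')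
    (A : C(K, ℝ) →L[ℝ] Lp ℝ r ν)
    (hpos : ∀ f : C(K, ℝ), 0 ≤ f → ∀ᵐ x ∂ν, 0 ≤ (A f : X → ℝ) x)
    (f : ℕ → C(K, ℝ)) (C : ℝ)
    (hC : ∀ (s : Finset ℕ) (c : ℕ → ℝ),
      ‖∑ n ∈ s, c n • f n‖ ≤ C * (∑ n ∈ s, |c n| ^ q') ^ (1 / q')) :
    ∀ᵐ x ∂ν, ∀ (N : ℕ) (c : ℕ → ℝ), ∑ n ∈ Finset.range N, c n * (A (f n) : X → ℝ) x ≤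
      C * (∑ n ∈ Finset.range N, |c n| ^ q') ^ (1 / q') * (A 1 : X → ℝ) x := by
  have key : ∀ᵐ x ∂ν, ∀ (N : ℕ) (c : Fin N → ℚ), ∑ n : Fin N, (c n : ℝ) * (A (f n) : X → ℝ) x ≤
      C * (∑ n : Fin N, |(c n : ℝ)| ^ q') ^ (1 / q') * (A 1 : X → ℝ) x := by
    rw [ae_all_iff]; intro N
    rw [ae_all_iff]; intro c
    let d : ℕ → ℝ := fun n => if h : n < N then (c ⟨n, h⟩ : ℝ) else 0
    have hd : ∀ n : Fin N, d n = c n := fun n => by simp [d]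
    set B := C * (∑ n : Fin N, |(c n : ℝ)| ^ q') ^ (1 / q') with hB
    have h1 : ‖∑ n : Fin N, (c n : ℝ) • f n‖ ≤ B := by
      have := hC (Finset.range N) d
      rw [← Fin.sum_univ_eq_sum_range (fun n => d n • f n),
        ← Fin.sum_univ_eq_sum_range (fun n => |d n| ^ q')] at this
      simpa only [hd] using this
    have h2 : 0 ≤ B • (1 : C(K, ℝ)) - ∑ n : Fin N, (c n : ℝ) • f n := by
      rw [ContinuousMap.le_def]
      intro k
      have := (le_abs_self _).trans
        ((ContinuousMap.norm_coe_le_norm (∑ n : Fin N, (c n : ℝ) • f n) k).trans h1)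
      simp only [ContinuousMap.coe_zero, Pi.zero_apply, ContinuousMap.sub_apply,
        ContinuousMap.smul_apply, ContinuousMap.one_apply, smul_eq_mul, mul_one]
      linarith
    have h3 := hpos _ h2
    have e1 : ∀ᵐ x ∂ν, ∀ n : Fin N, (((c n : ℝ) • A (f n) : Lp ℝ r ν) : X → ℝ) x
        = (c n : ℝ) * (A (f n) : X → ℝ) x := by
      rw [ae_all_iff]; intro n
      filter_upwards [Lp.coeFn_smul (c n : ℝ) (A (f n))] with x hx
      rw [hx]; rfl
    rw [map_sub, map_smul, map_sum] at h3
    simp only [map_smul] at h3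
    filter_upwards [h3, e1, Lp.coeFn_sub (B • A 1) (∑ n : Fin N, (c n : ℝ) • A (f n)),
      Lp.coeFn_smul B (A 1),
      Lp.coeFn_finsetSum Finset.univ (fun n : Fin N => (c n : ℝ) • A (f n))] with x h3 e1 e2 e3 e4
    rw [e2, Pi.sub_apply, e3, e4] at h3
    simp only [Finset.sum_apply, e1, Pi.smul_apply, smul_eq_mul] at h3
    linarith
  filter_upwards [key] with x hx N c
  have hcont : ∀ c : Fin N → ℝ, ∑ n : Fin N, c n * (A (f n) : X → ℝ) x ≤
      C * (∑ n : Fin N, |c n| ^ q') ^ (1 / q') * (A 1 : X → ℝ) x := by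
    have hdense : DenseRange (fun (c : Fin N → ℚ) (n : Fin N) => (c n : ℝ)) :=
      DenseRange.piMap (fun _ => Rat.denseRange_cast)
    intro c
    refine hdense.induction_on (p := fun c : Fin N → ℝ => ∑ n : Fin N, c n * (A (f n) : X → ℝ) x ≤
      C * (∑ n : Fin N, |c n| ^ q') ^ (1 / q') * (A 1 : X → ℝ) x) c ?_ (fun c => hx N c)
    refine isClosed_le (by fun_prop) ?_
    have : Continuous fun c : Fin N → ℝ => (∑ n : Fin N, |c n| ^ q') ^ (1 / q') := by
      refine Continuous.rpow_const ?_ (fun _ => Or.inr (by positivity))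
      refine continuous_finsetSum _ fun n _ => ?_
      exact Continuous.rpow_const (by fun_prop) (fun _ => Or.inr hq'.le)
    fun_prop
  have := hcont (fun n => c n)
  rw [Fin.sum_univ_eq_sum_range (fun n => c n * (A (f n) : X → ℝ) x),
    Fin.sum_univ_eq_sum_range (fun n => |c n| ^ q')] at this
  exact this

/-- if `𝒜 : Ω → B(C(K,ℝ), L^q(X,ν))` is weakly* integrable (against all
`g ∈ L^{q'}`) and each `𝒜_t` is a positive operator, then for every weakly
`p`-summable sequence `(f_n)` in `C(K,ℝ)` and every `(g_n)` in `L^{q'}` with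
`∑_n ‖g_n‖_{q'}^{q'} < ∞`, one has
`∫_Ω ∑_n |∫_X (𝒜_t f_n)·g_n dν| dμ < ∞`. -/
theorem stmt16 (K : Type*) [TopologicalSpace K] [CompactSpace K] [T2Space K]
    (X : Type*) [MeasurableSpace X] (ν : Measure X)
    (p q q' : ℝ) (hp : 1 ≤ p) (hpq : p ≤ q) (hq : 1 < q) (hq' : 1 / q + 1 / q' = 1)
    [Fact (1 ≤ ENNReal.ofReal q)] [Fact (1 ≤ ENNReal.ofReal q')]
    {Ω : Type*} [MeasurableSpace Ω] (μ : Measure Ω)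
    (𝒜 : Ω → (C(K, ℝ) →L[ℝ] Lp ℝ (ENNReal.ofReal q) ν))
    (hint : ∀ (f : C(K, ℝ)) (g : Lp ℝ (ENNReal.ofReal q') ν),
      Integrable (fun t => ∫ x, (𝒜 t f : X → ℝ) x * (g : X → ℝ) x ∂ν) μ)
    (hpos : ∀ t : Ω, ∀ f : C(K, ℝ), 0 ≤ f → ∀ᵐ x ∂ν, 0 ≤ (𝒜 t f : X → ℝ) x) :
    ∀ (f : ℕ → C(K, ℝ)) (g : ℕ → Lp ℝ (ENNReal.ofReal q') ν),
      (∀ φ : StrongDual ℝ C(K, ℝ), Summable fun n => ‖φ (f n)‖ ^ p) →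
      (Summable fun n => ‖g n‖ ^ q') →
      ∫⁻ t, ∑' n,
        (‖∫ x, (𝒜 t (f n) : X → ℝ) x * (g n : X → ℝ) x ∂ν‖₊ : ℝ≥0∞) ∂μ < ⊤ := by
  intro f g hf hg
  have hq'0 : 0 < q' := by
    have h1 : 1 / q < 1 := by rw [div_lt_one (by linarith)]; exact hq
    have h2 : 0 < 1 / q' := by linarith
    exact one_div_pos.1 h2
  have hqq : q.HolderConjugate q' := by
    rw [Real.holderConjugate_iff]
    exact ⟨hq, by simpa [one_div] using hq'⟩
  have hqqE : (ENNReal.ofReal q).HolderConjugate (ENNReal.ofReal q') := hqq.ennrealOfReal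
  obtain ⟨C, hC0, hC⟩ := weak_unif p q q' hp hpq hqq f hf
  obtain ⟨G, hG⟩ := exists_G ν q' hq'0 g hg
  have hbound : ∀ t, ∑' n, (‖∫ x, (𝒜 t (f n) : X → ℝ) x * (g n : X → ℝ) x ∂ν‖₊ : ℝ≥0∞) ≤
      ENNReal.ofReal (C * ∫ x, (𝒜 t 1 : X → ℝ) x * (G : X → ℝ) x ∂ν) := by
    intro t
    have hI : Integrable (fun x => (𝒜 t 1 : X → ℝ) x * (G : X → ℝ) x) ν :=
      MemLp.integrable_mul (Lp.memLp (𝒜 t 1)) (Lp.memLp G)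
    have h1 := hpos t 1 (fun _ => zero_le_one)
    have hGnn : ∀ᵐ x ∂ν, 0 ≤ (G : X → ℝ) x := by
      filter_upwards [hG] with x hx
      exact le_trans (Real.rpow_nonneg (by simp) _) (hx ∅)
    have hpt : ∀ᵐ x ∂ν, ∑' n, ‖(𝒜 t (f n) : X → ℝ) x * (g n : X → ℝ) x‖ₑ ≤
        ENNReal.ofReal (C * ((𝒜 t 1 : X → ℝ) x * (G : X → ℝ) x)) := by
      filter_upwards [pos_bound ν _ q' hq'0 (𝒜 t) (hpos t) f C hC, hG, h1] with x hx hGx h1x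
      refine ENNReal.tsum_le_of_sum_range_le fun N => ?_
      simp only [Real.enorm_eq_ofReal_abs]
      rw [← ENNReal.ofReal_sum_of_nonneg (fun _ _ => abs_nonneg _)]
      refine ENNReal.ofReal_le_ofReal ?_
      let c : ℕ → ℝ := fun n => if 0 ≤ (𝒜 t (f n) : X → ℝ) x then |(g n : X → ℝ) x|
        else -|(g n : X → ℝ) x|
      have hc : ∀ n, |c n| = |(g n : X → ℝ) x| := by
        intro n; simp only [c]; split_ifs <;> simp
      have hc2 : ∀ n, |(𝒜 t (f n) : X → ℝ) x * (g n : X → ℝ) x| = c n * (𝒜 t (f n) : X → ℝ) x := by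
        intro n; simp only [c]; rw [abs_mul]
        split_ifs with h
        · rw [abs_of_nonneg h]; ring
        · rw [abs_of_neg (not_le.1 h)]; ring
      have h2 := hx N c
      simp only [hc] at h2
      simp only [hc2]
      refine h2.trans ?_
      rw [mul_assoc, mul_comm ((𝒜 t 1 : X → ℝ) x)]
      gcongr
      exact hGx _
    calc ∑' n, (‖∫ x, (𝒜 t (f n) : X → ℝ) x * (g n : X → ℝ) x ∂ν‖₊ : ℝ≥0∞)
        ≤ ∑' n, ∫⁻ x, ‖(𝒜 t (f n) : X → ℝ) x * (g n : X → ℝ) x‖ₑ ∂ν :=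
          ENNReal.tsum_le_tsum fun n => enorm_integral_le_lintegral_enorm _
      _ = ∫⁻ x, ∑' n, ‖(𝒜 t (f n) : X → ℝ) x * (g n : X → ℝ) x‖ₑ ∂ν :=
          (lintegral_tsum fun n => ((Lp.aestronglyMeasurable (𝒜 t (f n))).mul
            (Lp.aestronglyMeasurable (g n))).enorm).symm
      _ ≤ ∫⁻ x, ENNReal.ofReal (C * ((𝒜 t 1 : X → ℝ) x * (G : X → ℝ) x)) ∂ν :=
          lintegral_mono_ae hpt
      _ = ENNReal.ofReal (∫ x, C * ((𝒜 t 1 : X → ℝ) x * (G : X → ℝ) x) ∂ν) := by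
          refine (ofReal_integral_eq_lintegral_ofReal (hI.const_mul C) ?_).symm
          filter_upwards [h1, hGnn] with x a b
          exact mul_nonneg hC0 (mul_nonneg a b)
      _ = _ := by rw [integral_const_mul]
  exact (lintegral_mono hbound).trans_lt ((hint 1 G).const_mul C).lintegral_lt_top
end
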